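/- arXiv:2309.16897 — 3 statements merged into one kernel-verified Lean document; each statement's English description precedes it below -/
import Mathlib

section
/- Let G be a finite simple graph on vertex set {1,…,n} with edge set E_G, let H be a spanning subgraph of G with edge set E_H ⊆ E_G, and let x* ∈ {−1,1}^n. For x ∈ {−1,1}^n define φ(x) = Σ_{{i,j}∈E_G∖E_H} x_i x_j x*_i x*_j − Σ_{{i,j}∈E_H} x_i x_j x*_i x*_j. Suppose that for every x ∈ {−1,1}^n with x ∉ {(1,…,1), (−1,…,−1)} one has xᵀ L_H x < (1/2)·xᵀ L_G x. Then φ(x*) = |E_G| − 2|E_H|, and for every x ∈ {−1,1}^n with x ∉ {x*, −x*} one has φ(x) < φ(x*); in particular, x* and −x* are the only maximizers of φ over {−1,1}^n. -/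
open Finset SimpleGraph Matrix

/-- The symmetric function `{i,j} ↦ x i * x j` on unordered pairs. -/
noncomputable def edgeProd {n : ℕ} (x : Fin n → ℝ) : Sym2 (Fin n) → ℝ :=
  Sym2.lift ⟨fun i j => x i * x j, fun i j => mul_comm (x i) (x j)⟩

/-- `φ(x) = Σ_{{i,j}∈E_G∖E_H} x_i x_j x*_i x*_j − Σ_{{i,j}∈E_H} x_i x_j x*_i x*_j`. -/
noncomputable def phiFun {n : ℕ} (G H : SimpleGraph (Fin n))
    [DecidableRel G.Adj] [DecidableRel H.Adj] (xs x : Fin n → ℝ) : ℝ :=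
  (∑ e ∈ G.edgeFinset \ H.edgeFinset, edgeProd (fun i => x i * xs i) e) -
    ∑ e ∈ H.edgeFinset, edgeProd (fun i => x i * xs i) e

/-!
Multiplying `x` entrywise by `x*` permutes the sign vectors and carries `±x*` to `±(1, …, 1)`, so
one may take `x* = (1, …, 1)`. For a sign vector `y`, every edge `{i, j}` satisfies
`(y i - y j) ^ 2 = 2 * (1 - y i * y j)`, so `yᵀ L y` is twice the sum of `1 - y i * y j` over the
edges, and the gap `|E_G| - 2 |E_H| - φ` is exactly `(1 / 2) yᵀ L_G y - yᵀ L_H y`.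
-/

section EdgeSums

variable {V : Type*} [Fintype V] (G : SimpleGraph V) [DecidableRel G.Adj]

theorem sum_dart_eq_sum_adj {M : Type*} [AddCommMonoid M] (f : V → V → M) :
    ∑ d : G.Dart, f d.fst d.snd = ∑ i, ∑ j, if G.Adj i j then f i j else 0 := by
  rw [← Fintype.sum_prod_type' fun i j => if G.Adj i j then f i j else 0, ← sum_filter]
  refine sum_bij' (fun d _ => d.toProd) (fun p hp => ⟨p, (mem_filter.1 hp).2⟩) ?_ ?_ ?_ ?_ ?_
    <;> simp

theorem sum_dart_eq_sum_edgeFinset {M : Type*} [AddCommMonoid M] (f : V → V → M) :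
    ∑ d : G.Dart, f d.fst d.snd =
      ∑ e ∈ G.edgeFinset,
        Sym2.lift ⟨fun i j => f i j + f j i, fun i j => add_comm (f i j) (f j i)⟩ e := by
  classical
  rw [← sum_fiberwise_of_maps_to fun (d : G.Dart) _ => mem_edgeFinset.2 d.edge_mem]
  refine sum_congr rfl fun e he => ?_
  induction e with
  | _ i j =>
    let d : G.Dart := ⟨(i, j), mem_edgeFinset.1 he⟩
    have hfiber : ({d' : G.Dart | d'.edge = s(i, j)} : Finset G.Dart) = {d, d.symm} :=
      d.edge_fiber
    rw [hfiber, sum_pair d.symm_ne.symm]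
    rfl

variable [DecidableEq V]

theorem dotProduct_lapMatrix_mulVec_eq_sum_adj {R : Type*} [CommRing R] (x : V → R) :
    x ⬝ᵥ (G.lapMatrix R *ᵥ x) =
      ∑ i, ∑ j, if G.Adj i j then x i * (x i - x j) else 0 := by
  refine sum_congr rfl fun i _ => ?_
  rw [lapMatrix_mulVec_apply, ← sum_filter, ← neighborFinset_eq_filter, ← mul_sum,
    sum_sub_distrib, sum_const, card_neighborFinset_eq_degree, nsmul_eq_mul]

theorem dotProduct_lapMatrix_mulVec_eq_sum_edgeFinset {R : Type*} [CommRing R] (x : V → R) :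
    x ⬝ᵥ (G.lapMatrix R *ᵥ x) =
      ∑ e ∈ G.edgeFinset,
        Sym2.lift ⟨fun i j => (x i - x j) ^ 2, fun i j => sub_sq_comm (x i) (x j)⟩ e := by
  rw [dotProduct_lapMatrix_mulVec_eq_sum_adj, ← sum_dart_eq_sum_adj G fun i j => x i * (x i - x j),
    sum_dart_eq_sum_edgeFinset G fun i j => x i * (x i - x j)]
  refine sum_congr rfl fun e _ => ?_
  induction e with
  | _ i j =>
    simp only [Sym2.lift_mk]
    ring

end EdgeSums

theorem mul_self_eq_one_iff_forall_eq_or_neg {ι R : Type*} [NonAssocRing R] [NoZeroDivisors R]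
    {x : ι → R} : x * x = 1 ↔ ∀ i, x i = 1 ∨ x i = -1 := by
  simp only [funext_iff, Pi.mul_apply, Pi.one_apply, mul_self_eq_one_iff]

section SignVectors

variable {n : ℕ}

theorem dotProduct_lapMatrix_mulVec_of_mul_self_eq_one (G : SimpleGraph (Fin n))
    [DecidableRel G.Adj] {y : Fin n → ℝ} (hy : y * y = 1) :
    y ⬝ᵥ (G.lapMatrix ℝ *ᵥ y) = 2 * (#G.edgeFinset - ∑ e ∈ G.edgeFinset, edgeProd y e) := by
  rw [dotProduct_lapMatrix_mulVec_eq_sum_edgeFinset, ← nsmul_one, ← sum_const, ← sum_sub_distrib,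
    mul_sum]
  refine sum_congr rfl fun e _ => ?_
  induction e with
  | _ i j =>
    simp only [edgeProd, Sym2.lift_mk]
    have hsq (k : Fin n) : y k * y k = 1 := congrFun hy k
    linear_combination hsq i + hsq j

theorem phiFun_eq_sum_sub_two_mul_sum {G H : SimpleGraph (Fin n)}
    [DecidableRel G.Adj] [DecidableRel H.Adj] (hHG : H ≤ G) (xs x : Fin n → ℝ) :
    phiFun G H xs x =
      ∑ e ∈ G.edgeFinset, edgeProd (x * xs) e - 2 * ∑ e ∈ H.edgeFinset, edgeProd (x * xs) e := by
  rw [phiFun, sum_sdiff_eq_sub (edgeFinset_subset_edgeFinset.2 hHG), sub_sub, ← two_mul]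
  rfl

theorem phiFun_eq_card_sub_lapMatrix_gap {G H : SimpleGraph (Fin n)}
    [DecidableRel G.Adj] [DecidableRel H.Adj] (hHG : H ≤ G) {xs x : Fin n → ℝ}
    (hy : (x * xs) * (x * xs) = 1) :
    phiFun G H xs x = #G.edgeFinset - 2 * #H.edgeFinset -
      ((1 / 2) * ((x * xs) ⬝ᵥ (G.lapMatrix ℝ *ᵥ (x * xs))) -
        (x * xs) ⬝ᵥ (H.lapMatrix ℝ *ᵥ (x * xs))) := by
  rw [phiFun_eq_sum_sub_two_mul_sum hHG, dotProduct_lapMatrix_mulVec_of_mul_self_eq_one G hy,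
    dotProduct_lapMatrix_mulVec_of_mul_self_eq_one H hy]
  ring

theorem phiFun_self {G H : SimpleGraph (Fin n)}
    [DecidableRel G.Adj] [DecidableRel H.Adj] (hHG : H ≤ G) {xs : Fin n → ℝ} (hxs : xs * xs = 1) :
    phiFun G H xs xs = #G.edgeFinset - 2 * #H.edgeFinset := by
  have hG : G.lapMatrix ℝ *ᵥ 1 = 0 := G.lapMatrix_mulVec_const_eq_zero
  have hH : H.lapMatrix ℝ *ᵥ 1 = 0 := H.lapMatrix_mulVec_const_eq_zero
  rw [phiFun_eq_card_sub_lapMatrix_gap hHG (by rw [hxs, one_mul]), hxs, hG, hH]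
  simp

end SignVectors

theorem stmt_0 {n : ℕ} (G H : SimpleGraph (Fin n))
    [DecidableRel G.Adj] [DecidableRel H.Adj] (hHG : H ≤ G)
    (xs : Fin n → ℝ) (hxs : ∀ i, xs i = 1 ∨ xs i = -1)
    (hcut : ∀ x : Fin n → ℝ, (∀ i, x i = 1 ∨ x i = -1) →
      x ≠ (fun _ => 1) → x ≠ (fun _ => -1) →
      x ⬝ᵥ ((H.lapMatrix ℝ) *ᵥ x) < (1 / 2) * (x ⬝ᵥ ((G.lapMatrix ℝ) *ᵥ x))) :
    phiFun G H xs xs = (G.edgeFinset.card : ℝ) - 2 * (H.edgeFinset.card : ℝ) ∧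
      ∀ x : Fin n → ℝ, (∀ i, x i = 1 ∨ x i = -1) →
        x ≠ xs → x ≠ (fun i => -xs i) → phiFun G H xs x < phiFun G H xs xs := by
  rw [← mul_self_eq_one_iff_forall_eq_or_neg] at hxs
  refine ⟨phiFun_self hHG hxs, fun x hx hne hne_neg => ?_⟩
  rw [← mul_self_eq_one_iff_forall_eq_or_neg] at hx
  have hy : (x * xs) * (x * xs) = 1 := by rw [mul_mul_mul_comm, hx, hxs, one_mul]
  have hy_ne_one : x * xs ≠ 1 := fun h => hne (left_inv_eq_right_inv h hxs)
  have hy_ne_neg_one : x * xs ≠ -1 := fun h =>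
    hne_neg (neg_eq_iff_eq_neg.1 (left_inv_eq_right_inv (by rw [neg_mul, h, neg_neg]) hxs))
  have hgap := hcut (x * xs) (mul_self_eq_one_iff_forall_eq_or_neg.1 hy) hy_ne_one hy_ne_neg_one
  rw [phiFun_self hHG hxs, phiFun_eq_card_sub_lapMatrix_gap hHG hy]
  exact sub_lt_self _ (sub_pos.2 hgap)
end

section
/- Let n ≥ 2 and let G be a finite simple graph on vertex set {1,…,n}, let s : {1,…,n} → ℕ (self-loop counts), and let D be the diagonal matrix with D_ii = deg_G(i) + s_i; assume D_ii > 0 for all i, and let d_min = min_i D_ii. Let L̃_G = D^{−1/2} L_G D^{−1/2} and let λ be the second-smallest eigenvalue of L̃_G. Let η ∈ (0,1) satisfy d_min·λ > (18/η)·log n, and set δ = sqrt(18·log n / (η·d_min·λ)). Let H be the random spanning subgraph of G obtained by including each edge of G independently with probability η (independent Bernoulli(η) choices, one per edge). Then with probability at least 1 − 1/n², L_H ⪯ η(1+δ)·L_G in the positive semidefinite order. -/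
open Finset SimpleGraph Matrix
open scoped Classical

/-- The Laplacian of the single edge `{a,b}`: `(χ_a − χ_b)(χ_a − χ_b)ᵀ`,
as a symmetric function of the unordered pair. -/
noncomputable def edgeLapSym2 {n : ℕ} : Sym2 (Fin n) → Matrix (Fin n) (Fin n) ℝ :=
  Sym2.lift ⟨fun a b => Matrix.of fun i j =>
      ((if i = a then (1 : ℝ) else 0) - (if i = b then 1 else 0)) *
        ((if j = a then (1 : ℝ) else 0) - (if j = b then 1 else 0)),
    fun a b => by ext i j; simp only [Matrix.of_apply]; ring⟩

/-!
For a projection `P = u uᵀ` of rank one, the function `t ↦ tr exp (H + log t • P)` is concave: by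
the Lie–Trotter formula it is the limit of `tr (exp (H / N) * (1 - P + t ^ (1 / N) • P)) ^ N`, which
is a polynomial in `t ^ (1 / N)` of degree at most `N` with nonnegative coefficients. This
special case of Lieb's theorem allows random rank-one summands to be replaced by deterministic ones
one at a time, giving the matrix Chernoff bound `ℙ (∑ Xₑ ⪯ (1 + δ) M) ≥ 1 - n exp (-c / R)`,
`c = (1 + δ) log (1 + δ) - δ`, whenever `E ∑ Xₑ ⪯ M` and `Xₑ ⪯ R M` for `n × n` matrices.

It is applied to the edge Laplacians with `M = η L`. Centring a test vector at its weighted mean and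
using the variational characterization of `λ`, the Laplacian of every edge is at most
`2 / (d_min λ) • L`, so one may take `R = 2 / (η d_min λ)`.
-/

section LieTrotter

open Filter Topology NormedSpace

variable {𝔸 : Type*} [NormedRing 𝔸]

theorem norm_pow_sub_pow_le [NormOneClass 𝔸] {x y : 𝔸} {M : ℝ} (hM : 1 ≤ M) (hx : ‖x‖ ≤ M)
    (hy : ‖y‖ ≤ M) (N : ℕ) :
    ‖x ^ N - y ^ N‖ ≤ N * ‖x - y‖ * M ^ N := by
  have : 0 ≤ M := zero_le_one.trans hM
  induction N with
  | zero => simp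
  | succ k ih =>
    have telescope : x ^ (k + 1) - y ^ (k + 1) = (x ^ k - y ^ k) * x + y ^ k * (x - y) := by
      rw [pow_succ, pow_succ]; noncomm_ring
    have hyk : ‖y ^ k‖ ≤ M ^ k := (norm_pow_le y k).trans (by gcongr)
    calc ‖x ^ (k + 1) - y ^ (k + 1)‖
        ≤ ‖x ^ k - y ^ k‖ * ‖x‖ + ‖y ^ k‖ * ‖x - y‖ :=
          telescope ▸ (norm_add_le _ _).trans (add_le_add (norm_mul_le _ _) (norm_mul_le _ _))
      _ ≤ (k * ‖x - y‖ * M ^ k) * M + (M ^ k * M) * ‖x - y‖ := by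
          gcongr
          exact hyk.trans (le_mul_of_one_le_right (by positivity) hM)
      _ = (k + 1 : ℕ) * ‖x - y‖ * M ^ (k + 1) := by push_cast; ring

theorem tendsto_pow_sub_pow_of_tendsto_mul_norm_sub [NormOneClass 𝔸] {x y : ℕ → 𝔸} {c : ℝ}
    (hc : 0 ≤ c) (hx : ∀ N : ℕ, ‖x N‖ ≤ Real.exp (c / N))
    (hy : ∀ N : ℕ, ‖y N‖ ≤ Real.exp (c / N))
    (hxy : Tendsto (fun N : ℕ ↦ N * ‖x N - y N‖) atTop (𝓝 0)) :
    Tendsto (fun N ↦ x N ^ N - y N ^ N) atTop (𝓝 0) := by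
  have hbound : Tendsto (fun N : ℕ ↦ N * ‖x N - y N‖ * Real.exp c) atTop (𝓝 0) := by
    simpa using hxy.mul_const (Real.exp c)
  refine squeeze_zero_norm' ?_ hbound
  filter_upwards [eventually_ne_atTop 0] with N hN
  have hpow : Real.exp (c / N) ^ N = Real.exp c := by
    rw [← Real.exp_nat_mul, mul_div_cancel₀ c (Nat.cast_ne_zero.2 hN)]
  exact hpow ▸ norm_pow_sub_pow_le (Real.one_le_exp (by positivity)) (hx N) (hy N) N

variable [NormedAlgebra ℝ 𝔸] [CompleteSpace 𝔸]

theorem norm_exp_le_exp_norm [NormOneClass 𝔸] (x : 𝔸) : ‖exp x‖ ≤ Real.exp ‖x‖ := by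
  have hreal := exp_series_hasSum_exp' (𝕂 := ℝ) ‖x‖
  rw [← Real.exp_eq_exp_ℝ] at hreal
  refine (exp_series_hasSum_exp' (𝕂 := ℝ) x).norm_le_of_bounded hreal fun k ↦ ?_
  rw [norm_smul, smul_eq_mul, norm_inv, Real.norm_natCast]
  gcongr
  exact norm_pow_le x k

theorem norm_exp_inv_natCast_smul_le [NormOneClass 𝔸] (x : 𝔸) (N : ℕ) :
    ‖exp ((N : ℝ)⁻¹ • x)‖ ≤ Real.exp (‖x‖ / N) := by
  refine (norm_exp_le_exp_norm _).trans_eq ?_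
  rw [norm_smul, norm_inv, Real.norm_natCast, inv_mul_eq_div]

theorem tendsto_mul_norm_exp_mul_exp_sub_exp_add (a b : 𝔸) :
    Tendsto (fun N : ℕ ↦ N * ‖exp ((N : ℝ)⁻¹ • a) * exp ((N : ℝ)⁻¹ • b) -
      exp ((N : ℝ)⁻¹ • (a + b))‖) atTop (𝓝 0) := by
  let : NormedAlgebra ℚ 𝔸 := NormedAlgebra.restrictScalars ℚ ℝ 𝔸
  have hderiv : HasDerivAt
      (fun t : ℝ ↦ exp (t • a) * exp (t • b) - exp (t • (a + b))) 0 0 := by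
    have h := ((hasDerivAt_exp_smul_const (𝕂 := ℝ) a 0).mul
      (hasDerivAt_exp_smul_const (𝕂 := ℝ) b 0)).sub
      (hasDerivAt_exp_smul_const (𝕂 := ℝ) (a + b) 0)
    convert! h using 1
    simp
  have hlittle := hderiv.isLittleO
  simp only [zero_smul, exp_zero, mul_one, sub_self, sub_zero, smul_zero] at hlittle
  have h := (hlittle.comp_tendsto tendsto_inv_atTop_nhds_zero_nat).norm_left.tendsto_div_nhds_zero
  simpa [Function.comp_def, div_eq_mul_inv, mul_comm] using h

/-- The **Lie–Trotter product formula**. -/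
theorem tendsto_exp_mul_exp_pow [NormOneClass 𝔸] (a b : 𝔸) :
    Tendsto (fun N : ℕ ↦ (exp ((N : ℝ)⁻¹ • a) * exp ((N : ℝ)⁻¹ • b)) ^ N) atTop
      (𝓝 (exp (a + b))) := by
  let : NormedAlgebra ℚ 𝔸 := NormedAlgebra.restrictScalars ℚ ℝ 𝔸
  have hleft (N : ℕ) : ‖exp ((N : ℝ)⁻¹ • a) * exp ((N : ℝ)⁻¹ • b)‖ ≤
      Real.exp ((‖a‖ + ‖b‖) / N) := by
    rw [add_div, Real.exp_add]
    exact (norm_mul_le _ _).trans (by gcongr <;> exact norm_exp_inv_natCast_smul_le _ N)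
  have hright (N : ℕ) : ‖exp ((N : ℝ)⁻¹ • (a + b))‖ ≤ Real.exp ((‖a‖ + ‖b‖) / N) :=
    (norm_exp_inv_natCast_smul_le _ N).trans (by gcongr; exact norm_add_le a b)
  have hpow : ∀ᶠ N : ℕ in atTop, exp ((N : ℝ)⁻¹ • (a + b)) ^ N = exp (a + b) := by
    filter_upwards [eventually_ne_atTop 0] with N hN
    rw [← NormedSpace.exp_nsmul, ← Nat.cast_smul_eq_nsmul ℝ, smul_smul,
      mul_inv_cancel₀ (Nat.cast_ne_zero.2 hN), one_smul]
  have hdiff := tendsto_pow_sub_pow_of_tendsto_mul_norm_sub (by positivity) hleft hright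
    (tendsto_mul_norm_exp_mul_exp_sub_exp_add a b)
  simpa using hdiff.add (tendsto_const_nhds.congr' (hpow.mono fun _ ↦ Eq.symm))

theorem exp_smul_of_isIdempotentElem {p : 𝔸} (hp : IsIdempotentElem p) (c : ℝ) :
    exp (c • p) = 1 - p + Real.exp c • p := by
  have hscalar : HasSum (fun k : ℕ ↦ ((k.factorial : ℝ)⁻¹ * c ^ k) • p) (Real.exp c • p) := by
    have h := exp_series_hasSum_exp' (𝕂 := ℝ) c
    rw [← Real.exp_eq_exp_ℝ] at h
    simpa using h.smul_const p
  have hconst : HasSum (fun k : ℕ ↦ if k = 0 then 1 - p else 0) (1 - p) := hasSum_ite_eq 0 _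
  refine (exp_series_hasSum_exp' (𝕂 := ℝ) (c • p)).unique ?_
  convert! hconst.add hscalar using 1
  ext (_ | k)
  · simp
  · simp [smul_pow, hp.pow_succ_eq, smul_smul]

end LieTrotter

section NonnegPolynomial

open Polynomial

theorem concaveOn_sum {ι E : Type*} [AddCommMonoid E] [Module ℝ E] {S : Set E} {g : ι → E → ℝ}
    (s : Finset ι) (hS : Convex ℝ S) (hg : ∀ i ∈ s, ConcaveOn ℝ S (g i)) :
    ConcaveOn ℝ S fun x ↦ ∑ i ∈ s, g i x := by
  have h := sum_induction g (ConcaveOn ℝ S) (fun _ _ ↦ ConcaveOn.add) (concaveOn_const 0 hS) hg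
  rwa [Finset.sum_fn] at h

/-- `f` is a polynomial function of degree at most `k` with nonnegative coefficients. In the
variable `t = s ^ k` each of its monomials is concave. -/
def IsNonnegPolynomialFun (k : ℕ) (f : ℝ → ℝ) : Prop :=
  ∃ p : ℝ[X], p.natDegree ≤ k ∧ (∀ j, 0 ≤ p.coeff j) ∧ ∀ s, f s = p.eval s

namespace IsNonnegPolynomialFun

variable {k : ℕ} {f g : ℝ → ℝ}

theorem const {c : ℝ} (hc : 0 ≤ c) : IsNonnegPolynomialFun k fun _ ↦ c :=
  ⟨C c, by simp, fun j ↦ by rw [coeff_C]; split_ifs <;> simp [hc], by simp⟩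

theorem mono {l : ℕ} (hkl : k ≤ l) (hf : IsNonnegPolynomialFun k f) :
    IsNonnegPolynomialFun l f :=
  let ⟨p, hdeg, hcoeff, heval⟩ := hf
  ⟨p, hdeg.trans hkl, hcoeff, heval⟩

theorem add (hf : IsNonnegPolynomialFun k f) (hg : IsNonnegPolynomialFun k g) :
    IsNonnegPolynomialFun k fun s ↦ f s + g s := by
  obtain ⟨p, hpdeg, hpcoeff, hp⟩ := hf
  obtain ⟨q, hqdeg, hqcoeff, hq⟩ := hg
  refine ⟨p + q, natDegree_add_le_of_degree_le hpdeg hqdeg, fun j ↦ ?_, fun s ↦ ?_⟩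
  · rw [coeff_add]; exact add_nonneg (hpcoeff j) (hqcoeff j)
  · simp only [eval_add, hp, hq]

theorem const_mul {c : ℝ} (hc : 0 ≤ c) (hf : IsNonnegPolynomialFun k f) :
    IsNonnegPolynomialFun k fun s ↦ c * f s := by
  obtain ⟨p, hdeg, hcoeff, heval⟩ := hf
  refine ⟨C c * p, (natDegree_C_mul_le c p).trans hdeg, fun j ↦ ?_, fun s ↦ ?_⟩
  · rw [coeff_C_mul]; exact mul_nonneg hc (hcoeff j)
  · simp only [eval_mul, eval_C, heval]

theorem id_mul (hf : IsNonnegPolynomialFun k f) :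
    IsNonnegPolynomialFun (k + 1) fun s ↦ s * f s := by
  obtain ⟨p, hdeg, hcoeff, heval⟩ := hf
  refine ⟨X * p, ?_, fun j ↦ ?_, fun s ↦ ?_⟩
  · have := natDegree_mul_le_of_le (natDegree_X_le (R := ℝ)) hdeg
    rwa [add_comm] at this
  · cases j <;> simp [hcoeff]
  · simp only [eval_mul, eval_X, heval]

theorem comp_rpow_inv_eq_sum (hf : IsNonnegPolynomialFun k f) :
    ∃ c : ℕ → ℝ, (∀ j, 0 ≤ c j) ∧ Set.EqOn (fun t ↦ f (t ^ (k : ℝ)⁻¹))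
      (fun t ↦ ∑ j ∈ range (k + 1), c j * t ^ ((j : ℝ) / k)) (Set.Ici 0) := by
  obtain ⟨p, hdeg, hcoeff, heval⟩ := hf
  refine ⟨p.coeff, hcoeff, fun t (ht : 0 ≤ t) ↦ ?_⟩
  simp only [heval, eval_eq_sum_range' (Nat.lt_succ_of_le hdeg)]
  refine sum_congr rfl fun j _ ↦ ?_
  rw [← Real.rpow_mul_natCast ht, inv_mul_eq_div]

theorem concaveOn_comp_rpow_inv (hf : IsNonnegPolynomialFun k f) :
    ConcaveOn ℝ (Set.Ici 0) fun t ↦ f (t ^ (k : ℝ)⁻¹) := by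
  obtain ⟨c, hc, hfc⟩ := hf.comp_rpow_inv_eq_sum
  refine ConcaveOn.congr ?_ hfc.symm
  refine concaveOn_sum _ (convex_Ici 0) fun j hj ↦ ?_
  have hjk : (j : ℝ) / k ≤ 1 :=
    div_le_one_of_le₀ (Nat.cast_le.2 (Nat.lt_succ_iff.1 (mem_range.1 hj))) (Nat.cast_nonneg k)
  exact (Real.concaveOn_rpow (by positivity) hjk).smul (hc j)

theorem monotoneOn (hf : IsNonnegPolynomialFun k f) : MonotoneOn f (Set.Ici 0) := by
  obtain ⟨p, -, hcoeff, heval⟩ := hf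
  intro s (hs : 0 ≤ s) t _ hst
  simp only [heval, eval_eq_sum_range]
  gcongr with j
  exact hcoeff j

end IsNonnegPolynomialFun

end NonnegPolynomial

section RankOnePerturbation

variable {m : Type*}

theorem isHermitian_vecMulVec_self (u : m → ℝ) : (vecMulVec u u).IsHermitian := by
  rw [IsHermitian, conjTranspose_vecMulVec, star_trivial]

variable [Fintype m]

theorem isIdempotentElem_vecMulVec_self {u : m → ℝ} (hu : u ⬝ᵥ u = 1) :
    IsIdempotentElem (vecMulVec u u) := by
  rw [IsIdempotentElem, vecMulVec_mul_vecMulVec, hu, one_smul]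

open scoped MatrixOrder in
theorem trace_mul_nonneg {A B : Matrix m m ℝ} (hA : A.PosSemidef) (hB : B.PosSemidef) :
    0 ≤ trace (A * B) := by
  obtain ⟨C, rfl⟩ := CStarAlgebra.nonneg_iff_eq_star_mul_self.1 hB.nonneg
  rw [← mul_assoc, trace_mul_comm, ← mul_assoc]
  exact (hA.mul_mul_conjTranspose_same C).trace_nonneg

variable [DecidableEq m]

theorem isNonnegPolynomialFun_dotProduct_mul_pow_mulVec {B : Matrix m m ℝ} {u w : m → ℝ}
    (hB : ∀ i : ℕ, 0 ≤ u ⬝ᵥ (B ^ i *ᵥ w)) (k i : ℕ) : IsNonnegPolynomialFun k fun s ↦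
      u ⬝ᵥ ((B ^ i * (B + s • vecMulVec w u) ^ k) *ᵥ w) := by
  induction k generalizing i with
  | zero => simpa using IsNonnegPolynomialFun.const (hB i)
  | succ k ih =>
    convert! ((ih (i + 1)).mono k.le_succ).add ((ih 0).id_mul.const_mul (hB i)) using 2 with s
    rw [pow_succ' _ k, ← mul_assoc, mul_add, ← pow_succ, add_mul, add_mulVec, dotProduct_add,
      Matrix.mul_smul, mul_vecMulVec, smul_mul, vecMulVec_mul, smul_mulVec, vecMulVec_mulVec]
    simp only [dotProduct_smul, smul_eq_mul, ← dotProduct_mulVec, op_smul_eq_smul, pow_zero,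
      one_mul]
    ring

theorem isNonnegPolynomialFun_trace_pow_mul {B : Matrix m m ℝ} {u w : m → ℝ}
    (hB : ∀ i : ℕ, 0 ≤ u ⬝ᵥ (B ^ i *ᵥ w)) (htr : ∀ i : ℕ, 0 ≤ trace (B ^ i)) (k i : ℕ) :
    IsNonnegPolynomialFun k fun s ↦ trace ((B + s • vecMulVec w u) ^ k * B ^ i) := by
  induction k generalizing i with
  | zero => simpa using IsNonnegPolynomialFun.const (htr i)
  | succ k ih =>
    convert! ((ih (i + 1)).mono k.le_succ).add
      (isNonnegPolynomialFun_dotProduct_mul_pow_mulVec hB k i).id_mul using 2 with s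
    rw [pow_succ _ k, mul_assoc, add_mul, mul_add, trace_add, ← pow_succ', smul_mul,
      vecMulVec_mul, Matrix.mul_smul, mul_vecMulVec, trace_smul, trace_vecMulVec, dotProduct_comm,
      ← dotProduct_mulVec, mulVec_mulVec, smul_eq_mul]

theorem posSemidef_mul_pow_mul {A Q : Matrix m m ℝ} (hA : A.PosSemidef) (hQ : Q.PosSemidef) :
    ∀ i : ℕ, ((A * Q) ^ i * A).PosSemidef
  | 0 => by simpa
  | 1 => by
    have h := hQ.mul_mul_conjTranspose_same A
    rwa [hA.isHermitian.eq, ← pow_one (A * Q)] at h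
  | i + 2 => by
    have h := (posSemidef_mul_pow_mul hA hQ i).mul_mul_conjTranspose_same (A * Q)
    rw [conjTranspose_mul, hA.isHermitian.eq, hQ.isHermitian.eq] at h
    convert! h using 1
    rw [pow_succ', pow_succ]
    simp only [mul_assoc]

theorem trace_mul_pow_nonneg {A Q : Matrix m m ℝ} (hA : A.PosSemidef) (hQ : Q.PosSemidef)
    (i : ℕ) : 0 ≤ trace ((A * Q) ^ i) := by
  cases i with
  | zero => simp
  | succ i =>
    rw [pow_succ, ← mul_assoc]
    exact trace_mul_nonneg (posSemidef_mul_pow_mul hA hQ i) hQ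

theorem posSemidef_one_sub_vecMulVec_self {u : m → ℝ} (hu : u ⬝ᵥ u = 1) :
    (1 - vecMulVec u u).PosSemidef := by
  have h := posSemidef_conjTranspose_mul_self (1 - vecMulVec u u)
  rwa [(isHermitian_one.sub (isHermitian_vecMulVec_self u)).eq,
    (isIdempotentElem_vecMulVec_self hu).one_sub.eq] at h

theorem isNonnegPolynomialFun_trace_mul_pow {A : Matrix m m ℝ} (hA : A.PosSemidef) {u : m → ℝ}
    (hu : u ⬝ᵥ u = 1) (N : ℕ) : IsNonnegPolynomialFun N fun s ↦
      trace ((A * (1 - vecMulVec u u + s • vecMulVec u u)) ^ N) := by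
  have hQ := posSemidef_one_sub_vecMulVec_self hu
  have hword (i : ℕ) : 0 ≤ u ⬝ᵥ ((A * (1 - vecMulVec u u)) ^ i *ᵥ (A *ᵥ u)) := by
    simpa [mulVec_mulVec] using (posSemidef_mul_pow_mul hA hQ i).dotProduct_mulVec_nonneg u
  simpa [mul_add, ← mul_vecMulVec] using
    isNonnegPolynomialFun_trace_pow_mul hword (trace_mul_pow_nonneg hA hQ) N 0

end RankOnePerturbation

section TraceExp

open NormedSpace Filter Topology

variable {m : Type*} [Fintype m] [DecidableEq m]

theorem posSemidef_exp {A : Matrix m m ℝ} (hA : A.IsHermitian) : (exp A).PosSemidef := by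
  have h := posSemidef_conjTranspose_mul_self (exp ((2⁻¹ : ℝ) • A))
  have hhalf : ((2⁻¹ : ℝ) • A).IsHermitian := hA.smul (IsSelfAdjoint.all _)
  rw [hhalf.exp.eq, ← Matrix.exp_add_of_commute _ _ (Commute.refl _), ← add_smul] at h
  norm_num at h
  exact h

open scoped Matrix.Norms.Operator in
theorem tendsto_trace_exp_mul_exp_pow (A B : Matrix m m ℝ) :
    Tendsto (fun N : ℕ ↦ trace ((exp ((N : ℝ)⁻¹ • A) * exp ((N : ℝ)⁻¹ • B)) ^ N)) atTop
      (𝓝 (trace (exp (A + B)))) := by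
  cases isEmpty_or_nonempty m
  · simp [trace]
  · exact (continuous_id.matrix_trace.tendsto _).comp (tendsto_exp_mul_exp_pow A B)

open scoped Matrix.Norms.Operator in
theorem exp_smul_vecMulVec_self {u : m → ℝ} (hu : u ⬝ᵥ u = 1) (σ : ℝ) :
    exp (σ • vecMulVec u u) = 1 - vecMulVec u u + Real.exp σ • vecMulVec u u :=
  exp_smul_of_isIdempotentElem (isIdempotentElem_vecMulVec_self hu) σ

theorem exists_isNonnegPolynomialFun_tendsto_trace_exp {H : Matrix m m ℝ} (hH : H.IsHermitian)
    {u : m → ℝ} (hu : u ⬝ᵥ u = 1) :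
    ∃ f : ℕ → ℝ → ℝ, (∀ N, IsNonnegPolynomialFun N (f N)) ∧
      ∀ σ : ℝ, Tendsto (fun N ↦ f N (Real.exp σ ^ (N : ℝ)⁻¹)) atTop
        (𝓝 (trace (exp (H + σ • vecMulVec u u)))) := by
  have hpos (N : ℕ) : (exp ((N : ℝ)⁻¹ • H)).PosSemidef :=
    posSemidef_exp (hH.smul (IsSelfAdjoint.all _))
  refine ⟨_, fun N ↦ isNonnegPolynomialFun_trace_mul_pow (hpos N) hu N, fun σ ↦ ?_⟩
  convert! tendsto_trace_exp_mul_exp_pow H (σ • vecMulVec u u) using 5 with N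
  rw [smul_smul, exp_smul_vecMulVec_self hu, ← Real.exp_mul, mul_comm]

/-- Lieb's concavity theorem for `t ↦ tr exp (H + log (t • P + (1 - P)))`, `P` a rank-one
projection. -/
theorem concaveOn_trace_exp_add_log_smul {H : Matrix m m ℝ} (hH : H.IsHermitian) {u : m → ℝ}
    (hu : u ⬝ᵥ u = 1) : ConcaveOn ℝ (Set.Ioi 0) fun t ↦
      trace (exp (H + Real.log t • vecMulVec u u)) := by
  obtain ⟨f, hf, hlim⟩ := exists_isNonnegPolynomialFun_tendsto_trace_exp hH hu
  have hlim' {t : ℝ} (ht : t ∈ Set.Ioi 0) := by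
    simpa only [Real.exp_log (Set.mem_Ioi.1 ht)] using hlim (Real.log t)
  refine ⟨convex_Ioi 0, fun x hx y hy a b ha hb hab ↦ ?_⟩
  refine le_of_tendsto_of_tendsto' (((hlim' hx).const_smul a).add ((hlim' hy).const_smul b))
    (hlim' (convex_Ioi 0 hx hy ha hb hab)) fun N ↦ ?_
  exact (hf N).concaveOn_comp_rpow_inv.2 (Set.Ioi_subset_Ici_self hx)
    (Set.Ioi_subset_Ici_self hy) ha hb hab

theorem monotone_trace_exp_add_smul {H : Matrix m m ℝ} (hH : H.IsHermitian) {u : m → ℝ}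
    (hu : u ⬝ᵥ u = 1) : Monotone fun σ : ℝ ↦ trace (exp (H + σ • vecMulVec u u)) := by
  obtain ⟨f, hf, hlim⟩ := exists_isNonnegPolynomialFun_tendsto_trace_exp hH hu
  refine fun σ τ hστ ↦ le_of_tendsto_of_tendsto' (hlim σ) (hlim τ) fun N ↦ ?_
  refine (hf N).monotoneOn ?_ ?_ ?_
  · exact Real.rpow_nonneg (Real.exp_pos σ).le _
  · exact Real.rpow_nonneg (Real.exp_pos τ).le _
  · gcongr

end TraceExp

section Bernoulli

variable {E : Type*} [Fintype E]

/-- The probability that independent Bernoulli variables with success probabilities `p e` take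
the values `f e`. -/
def bernoulliWeight (p : E → ℝ) (f : E → Bool) : ℝ :=
  ∏ e, if f e then p e else 1 - p e

theorem bernoulliWeight_nonneg {p : E → ℝ} (hp : ∀ e, p e ∈ Set.Icc 0 1) (f : E → Bool) :
    0 ≤ bernoulliWeight p f :=
  prod_nonneg fun e _ ↦ by split_ifs <;> linarith [(hp e).1, (hp e).2]

variable [DecidableEq E]

theorem sum_bernoulliWeight (p : E → ℝ) : ∑ f, bernoulliWeight p f = 1 := by
  have h := prod_univ_sum (fun _ : E ↦ (univ : Finset Bool)) fun e b ↦ if b then p e else 1 - p e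
  rw [Fintype.piFinset_univ] at h
  exact h.symm.trans (by simp)

/-- The probability of the event `A` under independent Bernoulli variables with success
probabilities `p e`. -/
noncomputable def bernoulliProb (p : E → ℝ) (A : (E → Bool) → Prop) : ℝ :=
  ∑ f, if A f then bernoulliWeight p f else 0

theorem bernoulliProb_add_bernoulliProb_not (p : E → ℝ) (A : (E → Bool) → Prop) :
    bernoulliProb p A + bernoulliProb p (fun f ↦ ¬A f) = 1 := by
  rw [← sum_bernoulliWeight p, bernoulliProb, bernoulliProb, ← sum_add_distrib]
  refine sum_congr rfl fun f _ ↦ ?_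
  split_ifs <;> simp

theorem bernoulliProb_mono {p : E → ℝ} (hp : ∀ e, p e ∈ Set.Icc 0 1) {A B : (E → Bool) → Prop}
    (hAB : ∀ f, A f → B f) : bernoulliProb p A ≤ bernoulliProb p B := by
  refine sum_le_sum fun f _ ↦ ?_
  have := bernoulliWeight_nonneg hp f
  by_cases hA : A f
  · rw [if_pos hA, if_pos (hAB f hA)]
  · rw [if_neg hA]
    split_ifs <;> simp [this]

theorem mul_bernoulliProb_le_sum {p : E → ℝ} (hp : ∀ e, p e ∈ Set.Icc 0 1)
    {A : (E → Bool) → Prop} {X : (E → Bool) → ℝ} (hX : ∀ f, 0 ≤ X f) {c : ℝ}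
    (hA : ∀ f, A f → c ≤ X f) : c * bernoulliProb p A ≤ ∑ f, bernoulliWeight p f * X f := by
  rw [bernoulliProb, mul_sum]
  refine sum_le_sum fun f _ ↦ ?_
  have hw := bernoulliWeight_nonneg hp f
  split_ifs with h
  · rw [mul_comm]
    exact mul_le_mul_of_nonneg_left (hA f h) hw
  · rw [mul_zero]
    exact mul_nonneg hw (hX f)

theorem sum_bernoulliWeight_fin_succ_mul {k : ℕ} (p : Fin (k + 1) → ℝ)
    (X : (Fin (k + 1) → Bool) → ℝ) : ∑ f, bernoulliWeight p f * X f =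
      p 0 * ∑ f, bernoulliWeight (fun i ↦ p i.succ) f * X (Fin.cons true f) +
      (1 - p 0) * ∑ f, bernoulliWeight (fun i ↦ p i.succ) f * X (Fin.cons false f) := by
  rw [← (Fin.consEquiv fun _ ↦ Bool).sum_comp, Fintype.sum_prod_type, Fintype.sum_bool]
  simp only [bernoulliWeight, Fin.consEquiv_apply, Fin.prod_univ_succ, Fin.cons_zero,
    Fin.cons_succ, if_true, Bool.false_eq_true, if_false, mul_sum, mul_assoc]
  rfl

variable {M : Type*} [AddCommMonoid M] {S : AddSubmonoid M} {Φ : M → ℝ}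

theorem sum_bernoulliWeight_mul_le_fin {k : ℕ} {p : Fin k → ℝ} (hp : ∀ e, p e ∈ Set.Icc 0 1)
    {x y : Fin k → M} (hx : ∀ e, x e ∈ S) (hy : ∀ e, y e ∈ S)
    (hstep : ∀ H ∈ S, ∀ e, (1 - p e) * Φ H + p e * Φ (H + x e) ≤ Φ (H + y e)) {H : M}
    (hH : H ∈ S) : ∑ f : Fin k → Bool, bernoulliWeight p f *
      Φ (H + ∑ e, if f e then x e else 0) ≤ Φ (H + ∑ e, y e) := by
  induction k generalizing H with
  | zero => simp [bernoulliWeight]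
  | succ k ih =>
    have htail {K : M} (hK : K ∈ S) := ih (fun e ↦ hp e.succ) (fun e ↦ hx e.succ)
      (fun e ↦ hy e.succ) (fun H hH e ↦ hstep H hH e.succ) hK
    have hhead := hstep (H + ∑ e : Fin k, y e.succ) (S.add_mem hH (sum_mem fun e _ ↦ hy e.succ)) 0
    rw [sum_bernoulliWeight_fin_succ_mul]
    simp only [Fin.sum_univ_succ, Fin.cons_zero, Fin.cons_succ, if_true, Bool.false_eq_true,
      if_false, zero_add, ← add_assoc]
    rw [add_right_comm, add_right_comm H _ (y 0)] at hhead
    linarith [mul_le_mul_of_nonneg_left (htail (S.add_mem hH (hx 0))) (hp 0).1,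
      mul_le_mul_of_nonneg_left (htail hH) (sub_nonneg.2 (hp 0).2)]

theorem sum_bernoulliWeight_mul_le {p : E → ℝ} (hp : ∀ e, p e ∈ Set.Icc 0 1) {x y : E → M}
    (hx : ∀ e, x e ∈ S) (hy : ∀ e, y e ∈ S)
    (hstep : ∀ H ∈ S, ∀ e, (1 - p e) * Φ H + p e * Φ (H + x e) ≤ Φ (H + y e)) :
    ∑ f : E → Bool, bernoulliWeight p f * Φ (∑ e, if f e then x e else 0) ≤ Φ (∑ e, y e) := by
  let φ := Fintype.equivFin E
  have h := sum_bernoulliWeight_mul_le_fin (fun e ↦ hp (φ.symm e)) (fun e ↦ hx (φ.symm e))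
    (fun e ↦ hy (φ.symm e)) (fun H hH e ↦ hstep H hH (φ.symm e)) S.zero_mem
  rw [← (φ.arrowCongr (Equiv.refl Bool)).sum_comp] at h
  simpa [bernoulliWeight, ← φ.sum_comp, ← φ.prod_comp] using h

end Bernoulli

section MatrixChernoff

open NormedSpace Filter Topology
open scoped MatrixOrder

theorem exp_mul_sub_one_le {θ r R : ℝ} (hr : 0 ≤ r) (hrR : r ≤ R) (hR : 0 < R) :
    Real.exp (θ * r) - 1 ≤ (Real.exp (θ * R) - 1) / R * r := by
  have h := convexOn_exp.2 (Set.mem_univ 0) (Set.mem_univ (θ * R))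
    (sub_nonneg.2 ((div_le_one hR).2 hrR)) (div_nonneg hr hR.le) (by ring)
  simp only [smul_eq_mul, mul_zero, zero_add, Real.exp_zero, mul_one] at h
  have hexp : r / R * (θ * R) = θ * r := by field_simp
  rw [hexp] at h
  linear_combination h

theorem sq_div_three_le_mul_log_sub {δ : ℝ} (h0 : 0 ≤ δ) (h1 : δ ≤ 1) :
    δ ^ 2 / 3 ≤ (1 + δ) * Real.log (1 + δ) - δ := by
  have hlog := mul_le_mul_of_nonneg_left (Real.le_log_one_add_of_nonneg h0)
    (by linarith : 0 ≤ 1 + δ)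
  calc δ ^ 2 / 3 ≤ δ ^ 2 / (δ + 2) := by gcongr; linarith
    _ = (1 + δ) * (2 * δ / (δ + 2)) - δ := by field_simp; ring
    _ ≤ (1 + δ) * Real.log (1 + δ) - δ := by linarith

variable {m : Type*} [Fintype m]

theorem exists_vecMulVec_self_eq_smul (v : m → ℝ) (hv : v ≠ 0) :
    ∃ u : m → ℝ, u ⬝ᵥ u = 1 ∧ vecMulVec v v = (v ⬝ᵥ v) • vecMulVec u u := by
  have hpos : 0 < v ⬝ᵥ v := by simpa using dotProduct_star_self_pos_iff.2 hv
  have hsq : √(v ⬝ᵥ v) * √(v ⬝ᵥ v) = v ⬝ᵥ v := Real.mul_self_sqrt hpos.le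
  refine ⟨(√(v ⬝ᵥ v))⁻¹ • v, ?_, ?_⟩
  · rw [smul_dotProduct, dotProduct_smul, smul_smul, ← mul_inv, hsq, smul_eq_mul,
      inv_mul_cancel₀ hpos.ne']
  · rw [smul_vecMulVec, vecMulVec_smul, smul_smul, smul_smul, mul_assoc, ← mul_inv, hsq,
      mul_inv_cancel₀ hpos.ne', one_smul]

variable [DecidableEq m]

theorem dotProduct_self_le_of_vecMulVec_self_le {v : m → ℝ} {R : ℝ}
    (h : vecMulVec v v ≤ R • (1 : Matrix m m ℝ)) (hv : v ≠ 0) : v ⬝ᵥ v ≤ R := by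
  have hpos : 0 < v ⬝ᵥ v := by simpa using dotProduct_star_self_pos_iff.2 hv
  have hvv := (le_iff.1 h).dotProduct_mulVec_nonneg v
  simp only [star_trivial, sub_mulVec, smul_mulVec, one_mulVec, vecMulVec_mulVec, dotProduct_sub,
    dotProduct_smul, smul_eq_mul, op_smul_eq_smul] at hvv
  exact le_of_mul_le_mul_right (by linarith) hpos

theorem trace_exp_add_smul_rankOne_le {H : Matrix m m ℝ} (hH : H.IsHermitian) {v : m → ℝ}
    {p θ R : ℝ} (hp : p ∈ Set.Icc 0 1) (hR : 0 < R) (hv : vecMulVec v v ≤ R • 1) :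
    (1 - p) * trace (exp H) + p * trace (exp (H + θ • vecMulVec v v)) ≤
      trace (exp (H + (p * ((Real.exp (θ * R) - 1) / R)) • vecMulVec v v)) := by
  rcases eq_or_ne v 0 with rfl | hv0
  · simp [← add_mul]
  obtain ⟨u, hu, hvu⟩ := exists_vecMulVec_self_eq_smul v hv0
  have hr := dotProduct_self_le_of_vecMulVec_self_le hv hv0
  have hr0 : 0 ≤ v ⬝ᵥ v := by simpa using dotProduct_star_self_nonneg v
  set r := v ⬝ᵥ v
  have hexp := exp_mul_sub_one_le (θ := θ) hr0 hr hR
  have hlog : Real.log (1 - p + p * Real.exp (θ * r)) ≤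
      p * ((Real.exp (θ * R) - 1) / R) * r := by
    have hpos : 0 < 1 - p + p * Real.exp (θ * r) := by
      rcases hp.2.eq_or_lt with rfl | h
      · simp [Real.exp_pos]
      · exact add_pos_of_pos_of_nonneg (sub_pos.2 h) (mul_nonneg hp.1 (Real.exp_pos _).le)
    linarith [Real.log_le_sub_one_of_pos hpos, mul_le_mul_of_nonneg_left hexp hp.1]
  have hconcave := (concaveOn_trace_exp_add_log_smul hH hu).2 (Set.mem_Ioi.2 one_pos)
    (Set.mem_Ioi.2 (Real.exp_pos (θ * r))) (sub_nonneg.2 hp.2) hp.1 (by ring)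
  simp only [smul_eq_mul, mul_one, Real.log_one, zero_smul, add_zero, Real.log_exp] at hconcave
  rw [hvu, smul_smul, smul_smul]
  exact hconcave.trans (monotone_trace_exp_add_smul hH hu hlog)

theorem trace_exp_eq_sum_exp_eigenvalues {A : Matrix m m ℝ} (hA : A.IsHermitian) :
    trace (exp A) = ∑ i, Real.exp (hA.eigenvalues i) := by
  set U := (hA.eigenvectorUnitary : Matrix m m ℝ)
  have hinv : U⁻¹ = star U := inv_eq_left_inv (Unitary.coe_star_mul_self _)
  have hU : IsUnit U := (Unitary.toUnits hA.eigenvectorUnitary).isUnit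
  conv_lhs => rw [hA.spectral_theorem, Unitary.conjStarAlgAut_apply, ← hinv,
    Matrix.exp_conj _ _ hU, trace_mul_cycle, nonsing_inv_mul _ ((isUnit_iff_isUnit_det _).1 hU),
    one_mul, exp_diagonal, trace_diagonal]
  simp [Pi.coe_exp, Real.exp_eq_exp_ℝ]

theorem le_smul_one_iff_eigenvalues_le {A : Matrix m m ℝ} (hA : A.IsHermitian) {c : ℝ} :
    A ≤ c • 1 ↔ ∀ i, hA.eigenvalues i ≤ c := by
  rw [← Algebra.algebraMap_eq_smul_one, le_algebraMap_iff_spectrum_le (ha := hA),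
    hA.spectrum_real_eq_range_eigenvalues, Set.forall_mem_range]

theorem trace_exp_le_of_le_smul_one {A : Matrix m m ℝ} (hA : A.IsHermitian) {c : ℝ}
    (h : A ≤ c • 1) : trace (exp A) ≤ Fintype.card m * Real.exp c := by
  rw [trace_exp_eq_sum_exp_eigenvalues hA, ← nsmul_eq_mul]
  exact sum_le_card_nsmul _ _ _ fun i _ ↦
    Real.exp_le_exp.2 ((le_smul_one_iff_eigenvalues_le hA).1 h i)

theorem exp_le_trace_exp_of_not_le_smul_one {A : Matrix m m ℝ} (hA : A.IsHermitian) {c : ℝ}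
    (h : ¬A ≤ c • 1) : Real.exp c ≤ trace (exp A) := by
  simp only [le_smul_one_iff_eigenvalues_le hA, not_forall, not_le] at h
  obtain ⟨i, hi⟩ := h
  rw [trace_exp_eq_sum_exp_eigenvalues hA]
  exact (Real.exp_le_exp.2 hi.le).trans
    (single_le_sum (f := fun i ↦ Real.exp (hA.eigenvalues i)) (fun _ _ ↦ (Real.exp_pos _).le)
      (mem_univ i))

variable {E : Type*} [Fintype E] [DecidableEq E]

theorem sum_bernoulliWeight_mul_trace_exp_le {p : E → ℝ} (hp : ∀ e, p e ∈ Set.Icc 0 1)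
    {X : E → Matrix m m ℝ} (hX : ∀ e, ∃ v, X e = vecMulVec v v) {R : ℝ} (hR : 0 < R)
    (hXR : ∀ e, X e ≤ R • 1) (θ : ℝ) :
    ∑ f : E → Bool, bernoulliWeight p f * trace (exp (θ • ∑ e, if f e then X e else 0)) ≤
      trace (exp (((Real.exp (θ * R) - 1) / R) • ∑ e, p e • X e)) := by
  have hherm (e : E) (c : ℝ) : c • X e ∈ selfAdjoint (Matrix m m ℝ) := by
    obtain ⟨v, hv⟩ := hX e
    exact hv ▸ (isHermitian_vecMulVec_self v).smul (IsSelfAdjoint.all c)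
  have h := sum_bernoulliWeight_mul_le (S := (selfAdjoint (Matrix m m ℝ)).toAddSubmonoid)
    (Φ := fun A ↦ trace (exp A)) hp (fun e ↦ hherm e θ)
    (fun e ↦ hherm e (p e * ((Real.exp (θ * R) - 1) / R))) fun H hH e ↦ ?_
  · simpa only [smul_sum, smul_ite, smul_zero, smul_smul, mul_comm] using h
  · obtain ⟨v, hv⟩ := hX e
    have hvR := hXR e
    rw [hv] at hvR ⊢
    exact trace_exp_add_smul_rankOne_le hH (hp e) hR hvR

theorem exp_mul_bernoulliProb_not_sum_le_smul_one_le {p : E → ℝ}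
    (hp : ∀ e, p e ∈ Set.Icc 0 1) {X : E → Matrix m m ℝ} (hX : ∀ e, ∃ v, X e = vecMulVec v v)
    {R : ℝ} (hR : 0 < R) (hXR : ∀ e, X e ≤ R • 1) (hsum : ∑ e, p e • X e ≤ 1) {θ : ℝ}
    (hθ : 0 < θ) (c : ℝ) :
    Real.exp (θ * c) * bernoulliProb p (fun f ↦ ¬∑ e, (if f e then X e else 0) ≤ c • 1) ≤
      Fintype.card m * Real.exp ((Real.exp (θ * R) - 1) / R) := by
  have hherm (e : E) : (X e).IsHermitian := by
    obtain ⟨v, hv⟩ := hX e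
    exact hv ▸ isHermitian_vecMulVec_self v
  have hθsum (f : E → Bool) : (θ • ∑ e, if f e then X e else 0).IsHermitian := by
    refine IsHermitian.smul ?_ (IsSelfAdjoint.all θ)
    refine isSelfAdjoint_sum _ fun e _ ↦ ?_
    split_ifs
    exacts [hherm e, IsSelfAdjoint.zero _]
  refine (mul_bernoulliProb_le_sum hp (fun f ↦ (posSemidef_exp (hθsum f)).trace_nonneg)
    fun f hf ↦ ?_).trans ((sum_bernoulliWeight_mul_trace_exp_le hp hX hR hXR θ).trans ?_)
  · refine exp_le_trace_exp_of_not_le_smul_one (hθsum f) fun h ↦ hf ?_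
    rwa [mul_smul, smul_le_smul_iff_of_pos_left hθ] at h
  · have hκ : 0 ≤ (Real.exp (θ * R) - 1) / R :=
      div_nonneg (sub_nonneg.2 (Real.one_le_exp (by positivity))) hR.le
    refine trace_exp_le_of_le_smul_one ?_ (smul_le_smul_of_nonneg_left hsum hκ)
    refine IsHermitian.smul ?_ (IsSelfAdjoint.all _)
    exact isSelfAdjoint_sum _ fun e _ ↦ (hherm e).smul (IsSelfAdjoint.all (p e))

theorem one_sub_le_bernoulliProb_sum_le_smul_one {p : E → ℝ} (hp : ∀ e, p e ∈ Set.Icc 0 1)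
    {X : E → Matrix m m ℝ} (hX : ∀ e, ∃ v, X e = vecMulVec v v) {R δ : ℝ} (hR : 0 < R)
    (hδ : 0 < δ) (hXR : ∀ e, X e ≤ R • 1) (hsum : ∑ e, p e • X e ≤ 1) :
    1 - Fintype.card m * Real.exp (-(((1 + δ) * Real.log (1 + δ) - δ) / R)) ≤
      bernoulliProb p fun f ↦ ∑ e, (if f e then X e else 0) ≤ (1 + δ) • 1 := by
  have hθ : 0 < Real.log (1 + δ) / R := div_pos (Real.log_pos (by linarith)) hR
  have htail := exp_mul_bernoulliProb_not_sum_le_smul_one_le hp hX hR hXR hsum hθ (1 + δ)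
  rw [div_mul_cancel₀ _ hR.ne', Real.exp_log (by linarith), add_sub_cancel_left, mul_comm,
    ← le_div_iff₀ (Real.exp_pos _), mul_div_assoc, ← Real.exp_sub] at htail
  have hexponent : δ / R - Real.log (1 + δ) / R * (1 + δ) =
      -(((1 + δ) * Real.log (1 + δ) - δ) / R) := by ring
  rw [hexponent] at htail
  linarith [bernoulliProb_add_bernoulliProb_not p
    fun f ↦ ∑ e, (if f e then X e else 0) ≤ (1 + δ) • (1 : Matrix m m ℝ)]

end MatrixChernoff

section RelativeMatrixChernoff

open Filter Topology
open scoped MatrixOrder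

theorem isClosed_setOf_posSemidef {m : Type*} :
    IsClosed {A : Matrix m m ℝ | A.PosSemidef} := by
  have hinter : {A : Matrix m m ℝ | A.PosSemidef} = {A | Aᴴ = A} ∩
      ⋂ x : m →₀ ℝ, {A | 0 ≤ x.sum fun i xi ↦ x.sum fun j xj ↦ star xi * A i j * xj} := by
    ext; simp [PosSemidef, IsHermitian]
  rw [hinter]
  refine (isClosed_eq (by fun_prop) continuous_id).inter (isClosed_iInter fun x ↦ ?_)
  refine isClosed_le continuous_const ?_
  simp only [Finsupp.sum]
  fun_prop

variable {m E : Type*} [Fintype m] [Fintype E] [DecidableEq E]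

theorem one_sub_le_bernoulliProb_sum_le_smul_of_posDef {p : E → ℝ}
    (hp : ∀ e, p e ∈ Set.Icc 0 1) {X : E → Matrix m m ℝ} (hX : ∀ e, ∃ v, X e = vecMulVec v v)
    {M : Matrix m m ℝ} (hM : M.PosDef) {R δ : ℝ} (hR : 0 < R) (hδ : 0 < δ)
    (hXR : ∀ e, X e ≤ R • M) (hsum : ∑ e, p e • X e ≤ M) :
    1 - Fintype.card m * Real.exp (-(((1 + δ) * Real.log (1 + δ) - δ) / R)) ≤
      bernoulliProb p fun f ↦ ∑ e, (if f e then X e else 0) ≤ (1 + δ) • M := by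
  obtain ⟨B, hB, rfl⟩ :=
    CStarAlgebra.isStrictlyPositive_iff_eq_star_mul_self.1 hM.isStrictlyPositive
  obtain ⟨C, hCB⟩ := hB.exists_left_inv
  let Y (e : E) : Matrix m m ℝ := star C * X e * C
  have hYX (e : E) : X e = star B * Y e * B := by
    simp only [Y, mul_assoc, hCB, mul_one]
    rw [← mul_assoc, ← star_mul, hCB, star_one, one_mul]
  have hY (e : E) : ∃ v, Y e = vecMulVec v v := by
    obtain ⟨v, hv⟩ := hX e
    refine ⟨v ᵥ* C, ?_⟩
    simp only [Y, hv, mul_vecMulVec, vecMulVec_mul, star_eq_conjTranspose,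
      conjTranspose_eq_transpose_of_trivial, mulVec_transpose]
  have hconj {A : Matrix m m ℝ} {c : ℝ} : star B * A * B ≤ c • (star B * B) ↔ A ≤ c • 1 := by
    rw [le_iff, le_iff, ← hB.posSemidef_star_left_conjugate_iff (x := c • 1 - A)]
    simp [mul_sub, sub_mul]
  simp only [hYX] at hXR hsum ⊢
  have hpush (c : E → ℝ) : ∑ e, c e • (star B * Y e * B) = star B * (∑ e, c e • Y e) * B := by
    simp [mul_sum, sum_mul]
  have hpush' (f : E → Bool) : ∑ e, (if f e then star B * Y e * B else 0) =
      star B * (∑ e, if f e then Y e else 0) * B := by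
    simpa [ite_smul] using hpush fun e ↦ if f e then 1 else 0
  simp only [hpush', hconj] at hXR ⊢
  refine one_sub_le_bernoulliProb_sum_le_smul_one hp hY hR hδ hXR ?_
  rwa [hpush, ← one_smul ℝ (star B * B), hconj, one_smul] at hsum

/-- Upper tail of the **matrix Chernoff bound** for rank-one summands. -/
theorem one_sub_le_bernoulliProb_sum_le_smul {p : E → ℝ} (hp : ∀ e, p e ∈ Set.Icc 0 1)
    {X : E → Matrix m m ℝ} (hX : ∀ e, ∃ v, X e = vecMulVec v v) {M : Matrix m m ℝ}
    {R δ : ℝ} (hR : 0 < R) (hδ : 0 < δ) (hXR : ∀ e, X e ≤ R • M) (hsum : ∑ e, p e • X e ≤ M) :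
    1 - Fintype.card m * Real.exp (-(((1 + δ) * Real.log (1 + δ) - δ) / R)) ≤
      bernoulliProb p fun f ↦ ∑ e, (if f e then X e else 0) ≤ (1 + δ) • M := by
  have hM : 0 ≤ M := by
    refine (sum_nonneg fun e _ ↦ smul_nonneg (hp e).1 ?_).trans hsum
    obtain ⟨v, hv⟩ := hX e
    simpa only [hv, star_trivial] using (posSemidef_vecMulVec_self_star v).nonneg
  -- There are finitely many outcomes, so for small `ε` replacing `M` by the positive definite
  -- `M + ε • 1` does not enlarge the event.
  let S (f : E → Bool) : Matrix m m ℝ := ∑ e, if f e then X e else 0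
  have hlim : Tendsto (fun ε : ℝ ↦ M + ε • (1 : Matrix m m ℝ)) (𝓝[>] 0) (𝓝 M) := by
    have hcont : Continuous fun ε : ℝ ↦ M + ε • (1 : Matrix m m ℝ) := by fun_prop
    simpa using (hcont.tendsto 0).mono_left nhdsWithin_le_nhds
  have hgood (f : E → Bool) : ∀ᶠ ε : ℝ in 𝓝[>] 0,
      S f ≤ (1 + δ) • (M + ε • 1) → S f ≤ (1 + δ) • M := by
    by_cases hf : S f ≤ (1 + δ) • M
    · exact .of_forall fun _ _ ↦ hf
    · refine (not_frequently.1 fun hfreq ↦ hf ?_).mono fun _ h h' ↦ absurd h' h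
      exact isClosed_setOf_posSemidef.mem_of_frequently_of_tendsto hfreq
        ((hlim.const_smul _).sub_const _)
  obtain ⟨ε, hε, hε0⟩ := ((eventually_all.2 hgood).and self_mem_nhdsWithin).exists
  have hone : (0 : Matrix m m ℝ) ≤ ε • 1 := (PosSemidef.one.smul (le_of_lt hε0)).nonneg
  have hle : M ≤ M + ε • 1 := le_add_of_nonneg_right hone
  refine (one_sub_le_bernoulliProb_sum_le_smul_of_posDef hp hX
    (PosDef.posSemidef_add (nonneg_iff_posSemidef.1 hM) (PosDef.one.smul hε0)) hR hδ
    (fun e ↦ (hXR e).trans (smul_le_smul_of_nonneg_left hle hR.le)) (hsum.trans hle)).trans ?_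
  exact bernoulliProb_mono hp hε

end RelativeMatrixChernoff

section Poincare

variable {V : Type*}

/-- The matrix `W^{-1/2} A W^{-1/2}`, where `W` is the diagonal matrix with entries `w`. -/
noncomputable def symmNormalize (w : V → ℝ) (A : Matrix V V ℝ) : Matrix V V ℝ :=
  of fun i j ↦ A i j / (√(w i) * √(w j))

variable [Fintype V]

/-- The Rayleigh quotients of `W^{-1/2} A W^{-1/2}` at the unit vectors orthogonal to `W^{1/2} 1`.
If `A` is a graph Laplacian, `W^{1/2} 1` is an eigenvector for the smallest eigenvalue `0`, so the
least element of this set is the second-smallest eigenvalue. -/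
def normalizedRayleighQuotients (w : V → ℝ) (A : Matrix V V ℝ) : Set ℝ :=
  {r | ∃ z : V → ℝ, ∑ i, z i * √(w i) = 0 ∧ ∑ i, z i ^ 2 = 1 ∧ r = z ⬝ᵥ (symmNormalize w A *ᵥ z)}

theorem mul_sum_sq_le_of_mem_lowerBounds {w : V → ℝ} {A : Matrix V V ℝ} {lam : ℝ}
    (hlam : lam ∈ lowerBounds (normalizedRayleighQuotients w A)) {z : V → ℝ}
    (hz : ∑ i, z i * √(w i) = 0) : lam * ∑ i, z i ^ 2 ≤ z ⬝ᵥ (symmNormalize w A *ᵥ z) := by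
  rcases eq_or_ne z 0 with rfl | hz0
  · simp
  have hpos : 0 < ∑ i, z i ^ 2 := by
    simpa [dotProduct, sq] using dotProduct_star_self_pos_iff.2 hz0
  set c := √(∑ i, z i ^ 2)
  have hc : c ^ 2 = ∑ i, z i ^ 2 := Real.sq_sqrt hpos.le
  have hc0 : c ≠ 0 := (Real.sqrt_pos.2 hpos).ne'
  have h := hlam ⟨c⁻¹ • z, ?_, ?_, rfl⟩
  · rw [mulVec_smul, dotProduct_smul, smul_dotProduct, smul_smul, ← mul_inv, ← sq, hc,
      smul_eq_mul, inv_mul_eq_div, le_div_iff₀ hpos] at h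
    exact h
  · simp only [Pi.smul_apply, smul_eq_mul, mul_assoc, ← mul_sum, hz, mul_zero]
  · simp only [Pi.smul_apply, smul_eq_mul, mul_pow, ← mul_sum, ← hc]
    rw [inv_pow, inv_mul_cancel₀ (pow_ne_zero 2 hc0)]

theorem dotProduct_symmNormalize_mulVec {w : V → ℝ} (hw : ∀ i, 0 < w i) (A : Matrix V V ℝ)
    (y : V → ℝ) : (fun i ↦ √(w i) * y i) ⬝ᵥ (symmNormalize w A *ᵥ fun i ↦ √(w i) * y i) =
      y ⬝ᵥ (A *ᵥ y) := by
  simp only [dotProduct, mulVec, mul_sum, symmNormalize, of_apply]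
  refine sum_congr rfl fun i _ ↦ sum_congr rfl fun j _ ↦ ?_
  have := (Real.sqrt_pos.2 (hw i)).ne'
  have := (Real.sqrt_pos.2 (hw j)).ne'
  field_simp

theorem mul_sum_mul_sq_le_dotProduct_mulVec {w : V → ℝ} (hw : ∀ i, 0 < w i)
    {A : Matrix V V ℝ} {lam : ℝ} (hlam : lam ∈ lowerBounds (normalizedRayleighQuotients w A))
    {y : V → ℝ} (hy : ∑ i, w i * y i = 0) : lam * ∑ i, w i * y i ^ 2 ≤ y ⬝ᵥ (A *ᵥ y) := by
  have hsq (i : V) : √(w i) ^ 2 = w i := Real.sq_sqrt (hw i).le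
  have h := mul_sum_sq_le_of_mem_lowerBounds hlam (z := fun i ↦ √(w i) * y i) <| by
    simpa only [mul_right_comm _ (y _), ← sq, hsq] using hy
  simpa only [mul_pow, hsq, dotProduct_symmNormalize_mulVec hw] using h

theorem sq_sub_le_two_mul_sum_sq_sub (x : V → ℝ) (c : ℝ) (a b : V) :
    (x a - x b) ^ 2 ≤ 2 * ∑ i, (x i - c) ^ 2 := by
  rcases eq_or_ne a b with rfl | hab
  · rw [sub_self, zero_pow two_ne_zero]
    positivity
  calc (x a - x b) ^ 2 ≤ 2 * ((x a - c) ^ 2 + (x b - c) ^ 2) := by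
        linarith [sq_nonneg (x a - c + (x b - c))]
    _ = 2 * ∑ i ∈ {a, b}, (x i - c) ^ 2 := by rw [sum_pair hab]
    _ ≤ 2 * ∑ i, (x i - c) ^ 2 := by
        gcongr
        exact subset_univ _

end Poincare

section Laplacian

open scoped MatrixOrder

variable {V : Type*}

/-- The Laplacian of a single edge, written as a rank-one matrix `v vᵀ`; it is `0` at a loop. -/
def edgeLaplacian [DecidableEq V] : Sym2 V → Matrix V V ℝ :=
  Sym2.lift ⟨fun a b ↦ vecMulVec (Pi.single a 1 - Pi.single b 1) (Pi.single a 1 - Pi.single b 1),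
    fun a b ↦ by beta_reduce; rw [← neg_sub, neg_vecMulVec, vecMulVec_neg, neg_neg]⟩

theorem edgeLapSym2_eq_edgeLaplacian {n : ℕ} (e : Sym2 (Fin n)) :
    edgeLapSym2 e = edgeLaplacian e := by
  induction e with
  | _ a b =>
    ext i j
    simp [edgeLapSym2, edgeLaplacian, vecMulVec_apply, Pi.single_apply]

theorem exists_edgeLaplacian_eq_vecMulVec_self [DecidableEq V] (e : Sym2 V) :
    ∃ v, edgeLaplacian e = vecMulVec v v := by
  induction e with
  | _ a b => exact ⟨_, rfl⟩

theorem isHermitian_edgeLaplacian [DecidableEq V] (e : Sym2 V) :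
    (edgeLaplacian e).IsHermitian := by
  obtain ⟨v, hv⟩ := exists_edgeLaplacian_eq_vecMulVec_self e
  exact hv ▸ isHermitian_vecMulVec_self v

variable [Fintype V]

theorem le_of_forall_dotProduct_mulVec_le {A B : Matrix V V ℝ} (hA : A.IsHermitian)
    (hB : B.IsHermitian) (h : ∀ x, x ⬝ᵥ (A *ᵥ x) ≤ x ⬝ᵥ (B *ᵥ x)) : A ≤ B := by
  refine le_iff.2 (.of_dotProduct_mulVec_nonneg (hB.sub hA) fun x ↦ ?_)
  rw [star_trivial, sub_mulVec, dotProduct_sub, sub_nonneg]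
  exact h x

theorem two_mul_sum_edgeFinset {R : Type*} [NonAssocSemiring R] (G : SimpleGraph V)
    [DecidableRel G.Adj] (h : Sym2 V → R) :
    2 * ∑ e ∈ G.edgeFinset, h e = ∑ i, ∑ j, if G.Adj i j then h s(i, j) else 0 := by
  have hdart : ∑ d : G.Dart, h d.edge = ∑ e ∈ G.edgeFinset, 2 * h e := by
    rw [← sum_fiberwise_of_maps_to (s := univ) (t := G.edgeFinset) (g := fun d : G.Dart ↦ d.edge)
      (fun d _ ↦ mem_edgeFinset.2 d.edge_mem)]
    refine sum_congr rfl fun e he ↦ ?_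
    rw [sum_congr rfl fun d hd ↦ by rw [(mem_filter.1 hd).2], sum_const,
      G.dart_edge_fiber_card e (mem_edgeFinset.1 he), nsmul_eq_mul]
    simp
  rw [mul_sum, ← hdart, ← Fintype.sum_prod_type', ← sum_filter]
  exact sum_bij (fun d _ ↦ d.toProd) (fun d _ ↦ by simp)
    (fun d _ d' _ hd ↦ SimpleGraph.Dart.ext _ _ hd)
    (fun p hp ↦ ⟨⟨p, (mem_filter.1 hp).2⟩, mem_univ _, rfl⟩) fun d _ ↦ rfl

variable [DecidableEq V]

theorem dotProduct_edgeLaplacian_mulVec (a b : V) (x : V → ℝ) :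
    x ⬝ᵥ (edgeLaplacian s(a, b) *ᵥ x) = (x a - x b) ^ 2 := by
  simp only [edgeLaplacian, Sym2.lift_mk, vecMulVec_mulVec, dotProduct_comm x]
  simp [sub_dotProduct, sq]

variable (G : SimpleGraph V) [DecidableRel G.Adj]

theorem dotProduct_lapMatrix_mulVec (x : V → ℝ) :
    x ⬝ᵥ (G.lapMatrix ℝ *ᵥ x) = (∑ i, ∑ j, if G.Adj i j then (x i - x j) ^ 2 else 0) / 2 := by
  rw [← G.lapMatrix_toLinearMap₂' ℝ, toLinearMap₂'_apply']

theorem sum_edgeLaplacian : ∑ e ∈ G.edgeFinset, edgeLaplacian e = G.lapMatrix ℝ := by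
  have hsum : (∑ e ∈ G.edgeFinset, edgeLaplacian e).IsHermitian :=
    isSelfAdjoint_sum _ fun e _ ↦ isHermitian_edgeLaplacian e
  have hform (x : V → ℝ) : x ⬝ᵥ ((∑ e ∈ G.edgeFinset, edgeLaplacian e) *ᵥ x) =
      x ⬝ᵥ (G.lapMatrix ℝ *ᵥ x) := by
    have h := two_mul_sum_edgeFinset G fun e ↦ x ⬝ᵥ (edgeLaplacian e *ᵥ x)
    simp only [dotProduct_edgeLaplacian_mulVec] at h
    rw [sum_mulVec, dotProduct_sum, dotProduct_lapMatrix_mulVec, ← h]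
    ring
  exact le_antisymm
    (le_of_forall_dotProduct_mulVec_le hsum (G.isHermitian_lapMatrix ℝ) fun x ↦ (hform x).le)
    (le_of_forall_dotProduct_mulVec_le (G.isHermitian_lapMatrix ℝ) hsum fun x ↦ (hform x).ge)

variable {G}

/-- Equivalently, effective resistances are at most `2 / (dmin * lam)`. -/
theorem edgeLaplacian_le_smul_lapMatrix {w : V → ℝ} {dmin lam : ℝ} (hdmin : 0 < dmin)
    (hw : ∀ i, dmin ≤ w i) (hlam0 : 0 < lam)
    (hlam : lam ∈ lowerBounds (normalizedRayleighQuotients w (G.lapMatrix ℝ))) (e : Sym2 V) :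
    edgeLaplacian e ≤ (2 / (dmin * lam)) • G.lapMatrix ℝ := by
  refine le_of_forall_dotProduct_mulVec_le (isHermitian_edgeLaplacian e)
    ((G.isHermitian_lapMatrix ℝ).smul (IsSelfAdjoint.all _)) fun x ↦ ?_
  induction e with
  | _ a b =>
    have hw0 (i : V) : 0 < w i := hdmin.trans_le (hw i)
    have hwsum : 0 < ∑ i, w i := sum_pos (fun i _ ↦ hw0 i) ⟨a, mem_univ a⟩
    set c := (∑ i, w i * x i) / ∑ i, w i with hc
    have hcentered : ∑ i, w i * (x i - c) = 0 := by
      simp only [mul_sub, sum_sub_distrib, ← sum_mul]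
      rw [hc, mul_div_cancel₀ _ hwsum.ne', sub_self]
    have hpoincare := mul_sum_mul_sq_le_dotProduct_mulVec hw0 hlam hcentered
    simp only [dotProduct_lapMatrix_mulVec, sub_sub_sub_cancel_right] at hpoincare
    rw [dotProduct_edgeLaplacian_mulVec, smul_mulVec, dotProduct_smul, smul_eq_mul,
      dotProduct_lapMatrix_mulVec, div_mul_eq_mul_div, le_div_iff₀ (mul_pos hdmin hlam0)]
    calc (x a - x b) ^ 2 * (dmin * lam)
        ≤ (2 * ∑ i, (x i - c) ^ 2) * (dmin * lam) := by
          gcongr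
          exact sq_sub_le_two_mul_sum_sq_sub x c a b
      _ = 2 * (lam * ∑ i, dmin * (x i - c) ^ 2) := by rw [← mul_sum]; ring
      _ ≤ 2 * (lam * ∑ i, w i * (x i - c) ^ 2) := by gcongr with i; exact hw i
      _ ≤ _ := by gcongr

theorem one_sub_le_bernoulliProb_sum_edgeLaplacian_le {η R δ : ℝ} (hη : η ∈ Set.Ioc 0 1)
    (hR : 0 < R) (hδ : 0 < δ) (hGR : ∀ e ∈ G.edgeFinset, edgeLaplacian e ≤ R • G.lapMatrix ℝ) :
    1 - Fintype.card V * Real.exp (-(((1 + δ) * Real.log (1 + δ) - δ) / (R / η))) ≤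
      bernoulliProb (fun _ : G.edgeFinset ↦ η) fun f ↦
        ∑ e, (if f e then edgeLaplacian e.1 else 0) ≤ (η * (1 + δ)) • G.lapMatrix ℝ := by
  have h := one_sub_le_bernoulliProb_sum_le_smul (p := fun _ : G.edgeFinset ↦ η)
    (fun _ ↦ ⟨hη.1.le, hη.2⟩) (fun e ↦ exists_edgeLaplacian_eq_vecMulVec_self e.1)
    (M := η • G.lapMatrix ℝ) (div_pos hR hη.1) hδ ?_ ?_
  · simpa only [smul_smul, mul_comm η] using h
  · intro e
    rw [smul_smul, div_mul_cancel₀ _ hη.1.ne']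
    exact hGR e.1 e.2
  · rw [← smul_sum, sum_coe_sort G.edgeFinset, sum_edgeLaplacian]

end Laplacian

theorem mul_exp_neg_chernoff_exponent_le {x μ δ : ℝ} (hx : 1 < x) (hμ : 18 * Real.log x < μ)
    (hδ : δ = √(18 * Real.log x / μ)) :
    x * Real.exp (-(((1 + δ) * Real.log (1 + δ) - δ) / (2 / μ))) ≤ 1 / x ^ 2 := by
  have hlog : 0 < Real.log x := Real.log_pos hx
  have hμ0 : 0 < μ := lt_trans (by positivity) hμ
  have hδsq : δ ^ 2 = 18 * Real.log x / μ := hδ ▸ Real.sq_sqrt (by positivity)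
  have hδ0 : 0 ≤ δ := hδ ▸ Real.sqrt_nonneg _
  have hδ1 : δ ≤ 1 := by
    rw [← sq_le_one_iff₀ hδ0, hδsq, div_le_one hμ0]
    exact hμ.le
  have hexponent : 3 * Real.log x ≤ ((1 + δ) * Real.log (1 + δ) - δ) / (2 / μ) := by
    calc 3 * Real.log x = δ ^ 2 / 3 / (2 / μ) := by rw [hδsq]; field_simp; norm_num
      _ ≤ _ := by gcongr; exact sq_div_three_le_mul_log_sub hδ0 hδ1
  calc _ ≤ x * Real.exp (-(3 * Real.log x)) := by gcongr
    _ = 1 / x ^ 2 := by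
      rw [Real.exp_neg, mul_comm 3, Real.exp_mul, Real.exp_log (by linarith)]
      field_simp
      norm_cast

open scoped MatrixOrder in
theorem stmt_3_general {V : Type*} [Fintype V] [DecidableEq V] [Nontrivial V]
    (G : SimpleGraph V) [DecidableRel G.Adj] {w : V → ℝ} (hw : ∀ i, 0 < w i) {dmin : ℝ}
    (hdmin : IsLeast (Set.range w) dmin) {lam : ℝ}
    (hlam : IsLeast (normalizedRayleighQuotients w (G.lapMatrix ℝ)) lam) {η : ℝ}
    (hη : η ∈ Set.Ioc 0 1) (hgap : 18 / η * Real.log (Fintype.card V) < dmin * lam) {δ : ℝ}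
    (hδ : δ = √(18 * Real.log (Fintype.card V) / (η * dmin * lam))) :
    1 - 1 / (Fintype.card V : ℝ) ^ 2 ≤ bernoulliProb (fun _ : G.edgeFinset ↦ η) fun f ↦
      ∑ e, (if f e then edgeLaplacian e.1 else 0) ≤ (η * (1 + δ)) • G.lapMatrix ℝ := by
  have hη0 := hη.1
  have hcard : (1 : ℝ) < Fintype.card V := by exact_mod_cast Fintype.one_lt_card
  have hlog : 0 < Real.log (Fintype.card V) := Real.log_pos hcard
  have hdmin0 : 0 < dmin := by
    obtain ⟨i, rfl⟩ := hdmin.1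
    exact hw i
  have hlam0 : 0 < lam := pos_of_mul_pos_right (lt_trans (by positivity) hgap) hdmin0.le
  have hδ0 : 0 < δ := hδ ▸ Real.sqrt_pos.2 (by positivity)
  have hmean : 18 * Real.log (Fintype.card V) < η * dmin * lam := by
    rw [div_mul_eq_mul_div, div_lt_iff₀ hη0] at hgap
    linarith
  have hedge (e : Sym2 V) : edgeLaplacian e ≤ (2 / (dmin * lam)) • G.lapMatrix ℝ :=
    edgeLaplacian_le_smul_lapMatrix hdmin0 (fun i ↦ hdmin.2 ⟨i, rfl⟩) hlam0 hlam.2 e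
  have hR : 2 / (dmin * lam) / η = 2 / (η * dmin * lam) := by rw [div_div]; ring
  refine le_trans ?_ (one_sub_le_bernoulliProb_sum_edgeLaplacian_le hη
    (R := 2 / (dmin * lam)) (by positivity) hδ0 fun e _ ↦ hedge e)
  rw [hR]
  exact sub_le_sub_left (mul_exp_neg_chernoff_exponent_le hcard hmean hδ) 1

theorem stmt_3 {n : ℕ} (hn : 2 ≤ n) (G : SimpleGraph (Fin n)) [DecidableRel G.Adj]
    (s : Fin n → ℕ) (D : Fin n → ℕ) (hD : ∀ i, D i = G.degree i + s i)
    (hDpos : ∀ i, 0 < D i)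
    (dmin : ℕ) (hdmin : IsLeast (Set.range D) dmin)
    -- `lam` is the second-smallest eigenvalue of `L̃_G = D^{−1/2} L_G D^{−1/2}`:
    -- the minimum of the Rayleigh quotient over unit vectors orthogonal to `D^{1/2}·1`,
    -- the eigenvector of the smallest eigenvalue `0`.
    (lam : ℝ)
    (hlam : IsLeast {r : ℝ | ∃ z : Fin n → ℝ,
        (∑ i, z i * Real.sqrt (D i)) = 0 ∧ (∑ i, (z i) ^ 2) = 1 ∧
        r = z ⬝ᵥ ((Matrix.of fun i j =>
          (G.lapMatrix ℝ) i j / (Real.sqrt (D i) * Real.sqrt (D j))) *ᵥ z)} lam)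
    (η : ℝ) (hη : η ∈ Set.Ioo (0 : ℝ) 1)
    (hgap : (dmin : ℝ) * lam > (18 / η) * Real.log n)
    (δ : ℝ) (hδ : δ = Real.sqrt (18 * Real.log n / (η * dmin * lam))) :
    1 - 1 / (n : ℝ) ^ 2 ≤
      ∑ f : {e : Sym2 (Fin n) // e ∈ G.edgeFinset} → Bool,
        if ((η * (1 + δ)) • G.lapMatrix ℝ -
              ∑ e ∈ G.edgeFinset.attach, (if f e then edgeLapSym2 e.1 else 0)).PosSemidef
        then ∏ e : {e : Sym2 (Fin n) // e ∈ G.edgeFinset}, (if f e then η else 1 - η)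
        else 0 := by
  have : Nontrivial (Fin n) := Fin.nontrivial_iff_two_le.2 hn
  have hdmin' : IsLeast (Set.range fun i ↦ (D i : ℝ)) dmin := by
    rw [Set.range_comp' Nat.cast D]
    exact Nat.mono_cast.map_isLeast hdmin
  have h := stmt_3_general G (fun i ↦ Nat.cast_pos.2 (hDpos i)) hdmin' hlam ⟨hη.1, hη.2.le⟩
    (by simpa using hgap) (by simpa using hδ)
  simpa only [Fintype.card_fin, bernoulliProb, bernoulliWeight, le_iff, univ_eq_attach,
    edgeLapSym2_eq_edgeLaplacian] using h
end

section
/- There is a universal constant c > 0 such that the following holds. Let G be a finite graph on vertex set V given by a finite edge-index set E with endpoint maps to unordered pairs of distinct vertices (parallel edges allowed), with m = |E| ≥ 2 edges and no isolated vertices, and let ε ∈ (0,1). Then there exists a partition V = V₁ ∪ ⋯ ∪ V_T such that: (a) the number of edges whose two endpoints lie in different parts is at most εm; and (b) for each i ∈ [T], writing L_i for the Laplacian of the subgraph of G induced on V_i and D_i for the diagonal matrix, indexed by V_i, whose entries are the degrees of the vertices in the whole graph G, every vector z ∈ ℝ^{V_i} orthogonal to D_i^{1/2}·1 satisfies zᵀ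 D_i^{−1/2} L_i D_i^{−1/2} z ≥ (c·ε²/log² m)·‖z‖². (Condition (b) says that the second-smallest eigenvalue of the normalized Laplacian of G{V_i}, the induced subgraph with self-loops added so vertices keep their G-degrees, is at least cε²/log² m.) -/
open Finset Matrix
open scoped Classical

/-- The Laplacian of the single edge `{a,b}`: `(χ_a − χ_b)(χ_a − χ_b)ᵀ`. -/
noncomputable def edgeLapV {V : Type} [DecidableEq V] (a b : V) : Matrix V V ℝ :=
  Matrix.of fun i j =>
    ((if i = a then (1 : ℝ) else 0) - (if i = b then 1 else 0)) *
      ((if j = a then (1 : ℝ) else 0) - (if j = b then 1 else 0))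

/-!
Let `vol` denote the sum of the degrees over a vertex set. Choose the partition minimizing

  `#(crossing edges) + K * ∑ (vol Vᵢ) log (vol Vᵢ)`,  `K = ε / (4 log m)`.

Comparing with the trivial partition, at most `K * 2m log (2m) ≤ ε m` edges cross. Splitting off
`A ⊆ Vᵢ` with `vol A ≤ vol Vᵢ / 2` lowers the entropy term by at least `K * log 2 * vol A`, so by
minimality at least that many edges of `G[Vᵢ]` leave `A`: each part has conductance at
least `K log 2`, and Cheeger's inequality turns this into the spectral gap `(K log 2)² / 2`.
-/

section Definitions

variable {V E ι : Type*} (a b : E → V)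

/-- The edges of `F` with exactly one endpoint in `A`, where the edge `e` joins `a e` and `b e`. -/
def edgeBoundary [DecidableEq V] (F : Finset E) (A : Finset V) : Finset E :=
  {e ∈ F | ¬(a e ∈ A ↔ b e ∈ A)}

/-- The degree of a vertex in the multigraph with edge set `F`; a loop contributes two. -/
def edgeDegree [DecidableEq V] (F : Finset E) (v : V) : ℕ :=
  #{e ∈ F | a e = v} + #{e ∈ F | b e = v}

/-- The multigraph on `S` with edge set `F` has conductance at least `φ`, volumes being measured by
the vertex weights `d`. Weights larger than the degrees amount to self-loops. -/
def IsExpander [DecidableEq V] (F : Finset E) (S : Finset V) (d : V → ℝ) (φ : ℝ) : Prop :=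
  ∀ A ⊆ S, 2 * ∑ v ∈ A, d v ≤ ∑ v ∈ S, d v → φ * ∑ v ∈ A, d v ≤ #(edgeBoundary a b F A)

/-- The edges running between different parts of a partition, encoded as a labelling `P` of the
vertices by their parts. -/
def crossingEdges [Fintype E] [DecidableEq ι] (P : V → ι) : Finset E :=
  {e | P (a e) ≠ P (b e)}

/-- The edges of the subgraph induced on the part with label `i`. -/
def innerEdges [Fintype E] [DecidableEq ι] (P : V → ι) (i : ι) : Finset E :=
  {e | P (a e) = i ∧ P (b e) = i}

/-- The volume of the part with label `i`, which is `0` for an unused label. -/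
def partVolume [Fintype V] [DecidableEq ι] (d : V → ℝ) (P : V → ι) (i : ι) : ℝ :=
  ∑ v with P v = i, d v

/-- The objective minimized by an expander decomposition: the number of crossing edges plus `K`
times the (negative) entropy of the volumes of the parts. -/
noncomputable def partitionCost [Fintype V] [Fintype E] [Fintype ι] [DecidableEq ι] (d : V → ℝ)
    (K : ℝ) (P : V → ι) : ℝ :=
  #(crossingEdges a b P) + K * ∑ i, partVolume d P i * Real.log (partVolume d P i)

end Definitions

section Degree

variable {V E : Type*} [DecidableEq V] {a b : E → V}

theorem edgeDegree_mono {F G : Finset E} (hFG : F ⊆ G) (v : V) :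
    edgeDegree a b F v ≤ edgeDegree a b G v := by
  unfold edgeDegree
  gcongr

theorem edgeDegree_eq_card_filter_or {F : Finset E} (hab : ∀ e ∈ F, a e ≠ b e) (v : V) :
    edgeDegree a b F v = #{e ∈ F | a e = v ∨ b e = v} := by
  rw [edgeDegree, filter_or, card_union_of_disjoint]
  exact disjoint_filter.2 fun e he ha hb => hab e he (ha.trans hb.symm)

theorem sum_endpoints_eq_sum_edgeDegree_mul {F : Finset E} {S : Finset V}
    (hF : ∀ e ∈ F, a e ∈ S ∧ b e ∈ S) (f : V → ℝ) :
    ∑ e ∈ F, (f (a e) + f (b e)) = ∑ v ∈ S, edgeDegree a b F v * f v := by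
  simp only [sum_add_distrib, edgeDegree, Nat.cast_add, add_mul]
  rw [← sum_fiberwise_of_maps_to' (fun e he => (hF e he).1) f,
    ← sum_fiberwise_of_maps_to' (fun e he => (hF e he).2) f]
  simp only [sum_const, nsmul_eq_mul]

theorem sum_edgeDegree_univ [Fintype V] [Fintype E] :
    ∑ v, (edgeDegree a b univ v : ℝ) = 2 * Fintype.card E := by
  have handshake := sum_endpoints_eq_sum_edgeDegree_mul (a := a) (b := b) (F := univ) (S := univ)
    (fun _ _ => ⟨mem_univ _, mem_univ _⟩) fun _ => 1
  simp only [mul_one, sum_const, card_univ, nsmul_eq_mul] at handshake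
  rw [← handshake]
  ring

end Degree

section Cheeger

open MeasureTheory

variable {V E : Type*} {a b : E → V} {F : Finset E} {S : Finset V} {d f : V → ℝ} {φ : ℝ}

theorem mem_uIoc_iff_not_le_iff_le {α : Type*} [LinearOrder α] {x y t : α} :
    t ∈ Set.uIoc x y ↔ ¬(t ≤ x ↔ t ≤ y) := by
  grind [Set.mem_uIoc]

theorem integral_indicator_uIoc (x y : ℝ) : ∫ t, (Set.uIoc x y).indicator 1 t = |x - y| := by
  rw [integral_indicator_one measurableSet_uIoc, measureReal_def, Real.volume_uIoc,
    ENNReal.toReal_ofReal (abs_nonneg _), abs_sub_comm]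

theorem integrable_indicator_uIoc (x y : ℝ) : Integrable ((Set.uIoc x y).indicator (1 : ℝ → ℝ)) :=
  (integrableOn_const (by simp)).integrable_indicator measurableSet_uIoc

theorem sum_mul_indicator_uIoc_zero {t : ℝ} (ht : 0 < t) :
    ∑ v ∈ S, d v * (Set.uIoc (f v) 0).indicator 1 t = ∑ v ∈ S with t ≤ f v, d v := by
  simp [Set.indicator_apply, mem_uIoc_iff_not_le_iff_le, ht.not_ge, sum_filter]

variable [DecidableEq V]

theorem sum_indicator_uIoc_eq_card_edgeBoundary (hF : ∀ e ∈ F, a e ∈ S ∧ b e ∈ S) (t : ℝ) :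
    ∑ e ∈ F, (Set.uIoc (f (a e)) (f (b e))).indicator (1 : ℝ → ℝ) t =
      #(edgeBoundary a b F {v ∈ S | t ≤ f v}) := by
  rw [edgeBoundary, natCast_card_filter]
  refine sum_congr rfl fun e he => ?_
  simp [Set.indicator_apply, mem_uIoc_iff_not_le_iff_le, hF e he]

-- Layer cake: `f v` and `|f (a e) - f (b e)|` are the lengths of the sets of levels `t > 0` whose
-- superlevel set contains `v`, respectively has `e` in its boundary.
theorem coarea_le_of_superlevel_sets (hF : ∀ e ∈ F, a e ∈ S ∧ b e ∈ S) (hf : ∀ v ∈ S, 0 ≤ f v)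
    (hφ : ∀ t > 0, φ * ∑ v ∈ S with t ≤ f v, d v ≤ #(edgeBoundary a b F {v ∈ S | t ≤ f v})) :
    φ * ∑ v ∈ S, d v * f v ≤ ∑ e ∈ F, |f (a e) - f (b e)| := by
  have level_le (t : ℝ) : φ * ∑ v ∈ S, d v * (Set.uIoc (f v) 0).indicator 1 t ≤
      ∑ e ∈ F, (Set.uIoc (f (a e)) (f (b e))).indicator 1 t := by
    rcases lt_or_ge 0 t with ht | ht
    · rw [sum_mul_indicator_uIoc_zero ht, sum_indicator_uIoc_eq_card_edgeBoundary hF]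
      exact hφ t ht
    · have vanish : ∀ v ∈ S, d v * (Set.uIoc (f v) 0).indicator 1 t = 0 := fun v hv => by
        simp [mem_uIoc_iff_not_le_iff_le, ht, ht.trans (hf v hv)]
      rw [sum_eq_zero vanish, mul_zero]
      exact sum_nonneg fun e _ => Set.indicator_nonneg (fun _ _ => zero_le_one) t
  have vol_integrable : ∀ v ∈ S, Integrable fun t => d v * (Set.uIoc (f v) 0).indicator 1 t :=
    fun v _ => (integrable_indicator_uIoc _ _).const_mul _
  have cut_integrable : ∀ e ∈ F,
      Integrable ((Set.uIoc (f (a e)) (f (b e))).indicator (1 : ℝ → ℝ)) := fun e _ =>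
    integrable_indicator_uIoc _ _
  calc φ * ∑ v ∈ S, d v * f v
      = ∫ t, φ * ∑ v ∈ S, d v * (Set.uIoc (f v) 0).indicator 1 t := by
        rw [integral_const_mul, integral_finsetSum _ vol_integrable]
        congr 1
        refine sum_congr rfl fun v hv => ?_
        rw [integral_const_mul, integral_indicator_uIoc, sub_zero, abs_of_nonneg (hf v hv)]
    _ ≤ ∫ t, ∑ e ∈ F, (Set.uIoc (f (a e)) (f (b e))).indicator 1 t :=
        integral_mono ((integrable_finsetSum _ vol_integrable).const_mul φ)
          (integrable_finsetSum _ cut_integrable) level_le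
    _ = ∑ e ∈ F, |f (a e) - f (b e)| := by
        rw [integral_finsetSum _ cut_integrable]
        simp only [integral_indicator_uIoc]

theorem sq_sum_abs_sq_sub_sq_le (hF : ∀ e ∈ F, a e ∈ S ∧ b e ∈ S)
    (hd : ∀ v ∈ S, edgeDegree a b F v ≤ d v) :
    (∑ e ∈ F, |f (a e) ^ 2 - f (b e) ^ 2|) ^ 2 ≤
      (∑ e ∈ F, (f (a e) - f (b e)) ^ 2) * (2 * ∑ v ∈ S, d v * f v ^ 2) := by
  have sum_sq_le : ∑ e ∈ F, (f (a e) + f (b e)) ^ 2 ≤ 2 * ∑ v ∈ S, d v * f v ^ 2 := by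
    calc ∑ e ∈ F, (f (a e) + f (b e)) ^ 2
        ≤ ∑ e ∈ F, 2 * (f (a e) ^ 2 + f (b e) ^ 2) := sum_le_sum fun e _ => add_sq_le
      _ = 2 * ∑ v ∈ S, edgeDegree a b F v * f v ^ 2 := by
          rw [← mul_sum, sum_endpoints_eq_sum_edgeDegree_mul hF fun v => f v ^ 2]
      _ ≤ 2 * ∑ v ∈ S, d v * f v ^ 2 := by
          gcongr with v hv
          exact hd v hv
  calc (∑ e ∈ F, |f (a e) ^ 2 - f (b e) ^ 2|) ^ 2
      = (∑ e ∈ F, |f (a e) - f (b e)| * |f (a e) + f (b e)|) ^ 2 := by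
        simp only [← abs_mul, sq_sub_sq, mul_comm]
    _ ≤ (∑ e ∈ F, |f (a e) - f (b e)| ^ 2) * ∑ e ∈ F, |f (a e) + f (b e)| ^ 2 :=
        sum_mul_sq_le_sq_mul_sq ..
    _ ≤ (∑ e ∈ F, (f (a e) - f (b e)) ^ 2) * (2 * ∑ v ∈ S, d v * f v ^ 2) := by
        simp only [sq_abs]
        gcongr

theorem IsExpander.cheeger_of_support_le_half (hexp : IsExpander a b F S d φ) (hφ : 0 ≤ φ)
    (hF : ∀ e ∈ F, a e ∈ S ∧ b e ∈ S) (hd : ∀ v ∈ S, edgeDegree a b F v ≤ d v)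
    (hsupp : 2 * ∑ v ∈ S with f v ≠ 0, d v ≤ ∑ v ∈ S, d v) :
    φ ^ 2 / 2 * ∑ v ∈ S, d v * f v ^ 2 ≤ ∑ e ∈ F, (f (a e) - f (b e)) ^ 2 := by
  have d_nonneg : ∀ v ∈ S, 0 ≤ d v := fun v hv => (Nat.cast_nonneg _).trans (hd v hv)
  have coarea : φ * ∑ v ∈ S, d v * f v ^ 2 ≤ ∑ e ∈ F, |f (a e) ^ 2 - f (b e) ^ 2| := by
    refine coarea_le_of_superlevel_sets hF (fun v _ => sq_nonneg _) fun t ht =>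
      hexp _ (filter_subset _ _) (le_trans ?_ hsupp)
    gcongr 2 * ?_
    refine sum_le_sum_of_subset_of_nonneg (monotone_filter_right _ fun v _ hv h0 => ?_)
      fun v hv _ => d_nonneg v (filter_subset _ _ hv)
    rw [h0, zero_pow two_ne_zero] at hv
    exact hv.not_gt ht
  have cauchy_schwarz := sq_sum_abs_sq_sub_sq_le (f := f) hF hd
  have energy_nonneg : 0 ≤ ∑ e ∈ F, (f (a e) - f (b e)) ^ 2 := sum_nonneg fun e _ => sq_nonneg _
  have mass_nonneg : 0 ≤ ∑ v ∈ S, d v * f v ^ 2 :=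
    sum_nonneg fun v hv => mul_nonneg (d_nonneg v hv) (sq_nonneg _)
  generalize ∑ v ∈ S, d v * f v ^ 2 = mass at *
  rcases mass_nonneg.eq_or_lt with rfl | mass_pos
  · simpa using energy_nonneg
  · have := (pow_le_pow_left₀ (by positivity) coarea 2).trans cauchy_schwarz
    refine le_of_mul_le_mul_right ?_ mass_pos
    linarith

theorem exists_weighted_median {V α R : Type*} [LinearOrder α] [Nonempty α] [CommRing R]
    [LinearOrder R] [IsStrictOrderedRing R] {S : Finset V} {d : V → R} (hd : ∀ v ∈ S, 0 ≤ d v)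
    (y : V → α) :
    ∃ t : α, 2 * ∑ v ∈ S with t < y v, d v ≤ ∑ v ∈ S, d v ∧
      2 * ∑ v ∈ S with y v < t, d v ≤ ∑ v ∈ S, d v := by
  rcases S.eq_empty_or_nonempty with rfl | hS
  · simp
  let light : Finset V := {w ∈ S | 2 * ∑ v ∈ S with y w < y v, d v ≤ ∑ v ∈ S, d v}
  have light_nonempty : light.Nonempty := by
    obtain ⟨w, hw, hmax⟩ := S.exists_max_image y hS
    refine ⟨w, mem_filter.2 ⟨hw, ?_⟩⟩
    rw [filter_false_of_mem fun v hv => (hmax v hv).not_gt, sum_empty, mul_zero]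
    exact sum_nonneg hd
  obtain ⟨u, hu, hu_min⟩ := light.exists_min_image y light_nonempty
  refine ⟨y u, (mem_filter.1 hu).2, ?_⟩
  rcases (S.filter fun v => y v < y u).eq_empty_or_nonempty with hbelow | hbelow
  · rw [hbelow, sum_empty, mul_zero]
    exact sum_nonneg hd
  obtain ⟨w, hw, hw_max⟩ := exists_max_image _ y hbelow
  obtain ⟨hwS, hwu⟩ := mem_filter.1 hw
  have w_heavy : ∑ v ∈ S, d v < 2 * ∑ v ∈ S with y w < y v, d v := by
    by_contra! hlight
    exact (hu_min w (mem_filter.2 ⟨hwS, hlight⟩)).not_gt hwu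
  have below_u : S.filter (fun v => y v < y u) = S.filter (fun v => ¬ y w < y v) :=
    filter_congr fun v hv =>
      ⟨fun h => (hw_max v (mem_filter.2 ⟨hv, h⟩)).not_gt, fun h => (not_lt.1 h).trans_lt hwu⟩
  have split := sum_filter_add_sum_filter_not S (fun v => y w < y v) d
  rw [below_u]
  linarith

theorem sq_eq_posPart_sq_add_negPart_sq {R : Type*} [CommRing R] [LinearOrder R]
    [IsStrictOrderedRing R] (x : R) : x ^ 2 = x⁺ ^ 2 + x⁻ ^ 2 := by
  rcases le_total 0 x with h | h <;> simp [h]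

theorem posPart_sub_sq_add_negPart_sub_sq_le {R : Type*} [CommRing R] [LinearOrder R]
    [IsStrictOrderedRing R] (x y : R) :
    (x⁺ - y⁺) ^ 2 + (x⁻ - y⁻) ^ 2 ≤ (x - y) ^ 2 := by
  rcases le_total 0 x with hx | hx <;> rcases le_total 0 y with hy | hy <;> simp [hx, hy] <;>
    nlinarith

theorem IsExpander.cheeger (hexp : IsExpander a b F S d φ) (hφ : 0 ≤ φ)
    (hF : ∀ e ∈ F, a e ∈ S ∧ b e ∈ S) (hd : ∀ v ∈ S, edgeDegree a b F v ≤ d v)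
    (hf : ∑ v ∈ S, d v * f v = 0) :
    φ ^ 2 / 2 * ∑ v ∈ S, d v * f v ^ 2 ≤ ∑ e ∈ F, (f (a e) - f (b e)) ^ 2 := by
  have d_nonneg : ∀ v ∈ S, 0 ≤ d v := fun v hv => (Nat.cast_nonneg _).trans (hd v hv)
  obtain ⟨t, above_le, below_le⟩ := exists_weighted_median d_nonneg f
  have pos_part := hexp.cheeger_of_support_le_half (f := fun v => (f v - t)⁺) hφ hF hd
    (by simpa only [ne_eq, posPart_eq_zero, sub_nonpos, not_le] using above_le)
  have neg_part := hexp.cheeger_of_support_le_half (f := fun v => (f v - t)⁻) hφ hF hd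
    (by simpa only [ne_eq, negPart_eq_zero, sub_nonneg, not_le] using below_le)
  have mass_shift : ∑ v ∈ S, d v * f v ^ 2 ≤ ∑ v ∈ S, d v * (f v - t) ^ 2 := by
    have expand : ∑ v ∈ S, d v * (f v - t) ^ 2 =
        ∑ v ∈ S, d v * f v ^ 2 - 2 * t * ∑ v ∈ S, d v * f v + ∑ v ∈ S, d v * t ^ 2 := by
      rw [mul_sum, ← sum_sub_distrib, ← sum_add_distrib]
      exact sum_congr rfl fun v _ => by ring
    rw [expand, hf, mul_zero, sub_zero]
    exact le_add_of_nonneg_right (sum_nonneg fun v hv => mul_nonneg (d_nonneg v hv) (sq_nonneg t))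
  calc φ ^ 2 / 2 * ∑ v ∈ S, d v * f v ^ 2
      ≤ φ ^ 2 / 2 * ∑ v ∈ S, d v * (f v - t) ^ 2 := by gcongr
    _ = φ ^ 2 / 2 * ∑ v ∈ S, d v * (f v - t)⁺ ^ 2 + φ ^ 2 / 2 * ∑ v ∈ S, d v * (f v - t)⁻ ^ 2 := by
        simp only [sq_eq_posPart_sq_add_negPart_sq (_ - t), mul_add, sum_add_distrib]
    _ ≤ ∑ e ∈ F, ((f (a e) - t)⁺ - (f (b e) - t)⁺) ^ 2 +
          ∑ e ∈ F, ((f (a e) - t)⁻ - (f (b e) - t)⁻) ^ 2 := add_le_add pos_part neg_part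
    _ ≤ ∑ e ∈ F, (f (a e) - f (b e)) ^ 2 := by
        rw [← sum_add_distrib]
        refine sum_le_sum fun e _ => ?_
        simpa only [sub_sub_sub_cancel_right] using
          posPart_sub_sq_add_negPart_sub_sq_le (f (a e) - t) (f (b e) - t)

end Cheeger

section Decomposition

theorem mul_log_add_mul_log_add_log_two_mul_le {x y : ℝ} (hx : 0 ≤ x) (hxy : x ≤ y) :
    x * Real.log x + y * Real.log y + Real.log 2 * x ≤ (x + y) * Real.log (x + y) := by
  rcases hx.eq_or_lt with rfl | hx
  · simp
  have hy : 0 < y := hx.trans_le hxy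
  have log_x_le : Real.log 2 + Real.log x ≤ Real.log (x + y) := by
    rw [← Real.log_mul two_ne_zero hx.ne']
    exact Real.log_le_log (by positivity) (by linarith)
  have log_y_le : Real.log y ≤ Real.log (x + y) := Real.log_le_log hy (by linarith)
  linarith [mul_le_mul_of_nonneg_left log_x_le hx.le, mul_le_mul_of_nonneg_left log_y_le hy.le]

variable {V E ι : Type*} [DecidableEq ι] {a b : E → V} {d : V → ℝ} {K : ℝ} {P : V → ι}
  {A : Finset V} {i j : ι}

-- For an unused label `j`, `A.piecewise (fun _ => j) P` splits `A` off from part `i`.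
theorem crossingEdges_piecewise_subset [Fintype E] [DecidableEq V] (hA : ∀ v ∈ A, P v = i) :
    crossingEdges a b (A.piecewise (fun _ => j) P) ⊆
      crossingEdges a b P ∪ edgeBoundary a b (innerEdges a b P i) A := by
  intro e he
  simp only [crossingEdges, edgeBoundary, innerEdges, mem_union, mem_filter, mem_univ,
    true_and] at he ⊢
  grind [Finset.piecewise]

variable [Fintype V]

theorem card_crossingEdges_le_of_forall_partitionCost_le [Fintype E] [Fintype ι] [Nonempty ι]
    (hd : ∀ v, 1 ≤ d v) (hK : 0 ≤ K)
    (hP : ∀ Q : V → ι, partitionCost a b d K P ≤ partitionCost a b d K Q) :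
    #(crossingEdges a b P) ≤ K * ((∑ v, d v) * Real.log (∑ v, d v)) := by
  have entropy_nonneg (k : ι) : 0 ≤ partVolume d P k * Real.log (partVolume d P k) := by
    rcases ({v | P v = k} : Finset V).eq_empty_or_nonempty with hempty | ⟨w, hw⟩
    · simp [partVolume, hempty]
    · exact Real.mul_log_nonneg ((hd w).trans
        (single_le_sum (f := d) (fun v _ => zero_le_one.trans (hd v)) hw))
  obtain ⟨o⟩ := ‹Nonempty ι›
  have trivial_cost : partitionCost a b d K (fun _ => o) =
      K * ((∑ v, d v) * Real.log (∑ v, d v)) := by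
    rw [partitionCost, sum_eq_single o]
    · simp [crossingEdges, partVolume]
    · intro k _ hk
      simp [partVolume, hk.symm]
    · simp
  calc (#(crossingEdges a b P) : ℝ)
      ≤ partitionCost a b d K P :=
        le_add_of_nonneg_right (mul_nonneg hK (sum_nonneg fun k _ => entropy_nonneg k))
    _ ≤ partitionCost a b d K (fun _ => o) := hP _
    _ = _ := trivial_cost

variable [DecidableEq V]

theorem partVolume_piecewise_fresh (hj : ∀ v, P v ≠ j) :
    partVolume d (A.piecewise (fun _ => j) P) j = ∑ v ∈ A, d v := by
  have fiber : ∀ v, A.piecewise (fun _ => j) P v = j ↔ v ∈ A := fun v => by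
    by_cases hv : v ∈ A <;> simp [hv, hj v]
  simp [partVolume, fiber]

theorem partVolume_piecewise_split (hA : ∀ v ∈ A, P v = i) (hij : i ≠ j) :
    partVolume d (A.piecewise (fun _ => j) P) i = partVolume d P i - ∑ v ∈ A, d v := by
  have fiber : ({v | A.piecewise (fun _ => j) P v = i} : Finset V) =
      ({v | P v = i} : Finset V) \ A := by
    ext v
    by_cases hv : v ∈ A <;> simp [hv, hij.symm]
  rw [partVolume, fiber, partVolume, eq_sub_iff_add_eq, sum_sdiff]
  exact fun v hv => by simpa using hA v hv

theorem partVolume_piecewise_of_ne (hA : ∀ v ∈ A, P v = i) {k : ι} (hki : k ≠ i) (hkj : k ≠ j) :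
    partVolume d (A.piecewise (fun _ => j) P) k = partVolume d P k := by
  have fiber : ∀ v, A.piecewise (fun _ => j) P v = k ↔ P v = k := fun v => by
    by_cases hv : v ∈ A
    · simp [hv, hA v hv, hki.symm, hkj.symm]
    · simp [hv]
  simp only [partVolume, fiber]

theorem sum_comp_partVolume_piecewise [Fintype ι] (h : ℝ → ℝ) (hA : ∀ v ∈ A, P v = i)
    (hij : i ≠ j) (hj : ∀ v, P v ≠ j) :
    ∑ k, h (partVolume d (A.piecewise (fun _ => j) P) k) - ∑ k, h (partVolume d P k) =
      h (partVolume d P i - ∑ v ∈ A, d v) + h (∑ v ∈ A, d v) - h (partVolume d P i) - h 0 := by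
  have fresh_empty : partVolume d P j = 0 := by simp [partVolume, hj]
  rw [← sum_sub_distrib, sum_eq_add_of_mem i j (mem_univ _) (mem_univ _) hij fun k _ hk => by
    rw [partVolume_piecewise_of_ne hA hk.1 hk.2, sub_self]]
  rw [partVolume_piecewise_split hA hij, partVolume_piecewise_fresh hj, fresh_empty]
  ring

variable [Fintype E]

theorem isExpander_of_forall_partitionCost_le [Fintype ι] (hcard : Nat.card V ≤ Nat.card ι)
    (hd : ∀ v, 0 < d v) (hK : 0 ≤ K)
    (hP : ∀ Q : V → ι, partitionCost a b d K P ≤ partitionCost a b d K Q) (i : ι) :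
    IsExpander a b (innerEdges a b P i) {v | P v = i} d (K * Real.log 2) := by
  intro A hA hhalf
  rcases A.eq_empty_or_nonempty with rfl | hne
  · simp
  have A_label : ∀ v ∈ A, P v = i := fun v hv => by simpa using hA hv
  have vol_pos : 0 < ∑ v ∈ A, d v := sum_pos (fun v _ => hd v) hne
  obtain ⟨u, hu, huA⟩ : ∃ u, P u = i ∧ u ∉ A := by
    by_contra! hall
    rw [hA.antisymm fun v hv => hall v (by simpa using hv)] at vol_pos hhalf
    linarith
  obtain ⟨w, hw⟩ := hne
  obtain ⟨j, hj⟩ : ∃ j, ∀ v, P v ≠ j := by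
    by_contra! hsurj
    have hinj := (Function.Surjective.bijective_of_nat_card_le hsurj hcard).injective
    exact huA (hinj (hu.trans (A_label w hw).symm) ▸ hw)
  set Q := A.piecewise (fun _ => j) P
  have cut : (#(crossingEdges a b Q) : ℝ) ≤
      #(crossingEdges a b P) + #(edgeBoundary a b (innerEdges a b P i) A) := mod_cast
    (card_le_card (crossingEdges_piecewise_subset A_label)).trans (card_union_le _ _)
  have entropy_drop : Real.log 2 * ∑ v ∈ A, d v ≤
      ∑ k, partVolume d P k * Real.log (partVolume d P k) -
        ∑ k, partVolume d Q k * Real.log (partVolume d Q k) := by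
    have change := sum_comp_partVolume_piecewise (d := d) (fun s => s * Real.log s) A_label
      (fun hij => hj u (hu.trans hij)) hj
    have gain := mul_log_add_mul_log_add_log_two_mul_le vol_pos.le
      (show _ ≤ partVolume d P i - ∑ v ∈ A, d v by unfold partVolume; linarith)
    rw [add_sub_cancel] at gain
    linarith
  have minimal := hP Q
  unfold partitionCost at minimal
  linarith [mul_le_mul_of_nonneg_left entropy_drop hK]

theorem exists_expander_partition [Finite ι] [Nonempty ι] (a b : E → V)
    (hcard : Nat.card V ≤ Nat.card ι) (hd : ∀ v, 1 ≤ d v) (hK : 0 ≤ K) :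
    ∃ P : V → ι, #(crossingEdges a b P) ≤ K * ((∑ v, d v) * Real.log (∑ v, d v)) ∧
      ∀ i, IsExpander a b (innerEdges a b P i) {v | P v = i} d (K * Real.log 2) := by
  cases nonempty_fintype ι
  obtain ⟨P, hP⟩ := Finite.exists_min (partitionCost (ι := ι) a b d K)
  exact ⟨P, card_crossingEdges_le_of_forall_partitionCost_le hd hK hP,
    isExpander_of_forall_partitionCost_le hcard (fun v => zero_lt_one.trans_le (hd v)) hK hP⟩

end Decomposition

section SpectralGap

variable {V E : Type*} [Fintype V] [DecidableEq V] [Fintype E] {a b : E → V} {ε : ℝ}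

theorem exists_partition_conductance (hdeg : ∀ v, 1 ≤ edgeDegree a b univ v)
    (hE : 2 ≤ Fintype.card E) (hε : 0 ≤ ε) :
    ∃ P : V → Fin (Fintype.card V), #(crossingEdges a b P) ≤ ε * Fintype.card E ∧
      ∀ i, IsExpander a b (innerEdges a b P i) {v | P v = i} (fun v => edgeDegree a b univ v)
        (ε / (4 * Real.log (Fintype.card E)) * Real.log 2) := by
  have : Nonempty E := Fintype.card_pos_iff.1 (by omega)
  have : Nonempty (Fin (Fintype.card V)) := ⟨Fintype.equivFin V (a (Classical.arbitrary E))⟩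
  have hm : (2 : ℝ) ≤ Fintype.card E := mod_cast hE
  have log_pos : 0 < Real.log (Fintype.card E) := Real.log_pos (by linarith)
  have log_vol_le : Real.log (2 * Fintype.card E) ≤ 2 * Real.log (Fintype.card E) := by
    rw [Real.log_mul two_ne_zero (by positivity), two_mul]
    gcongr
  obtain ⟨P, hcross, hexp⟩ := exists_expander_partition (ι := Fin (Fintype.card V)) a b (by simp)
    (d := fun v => edgeDegree a b univ v) (fun v => Nat.one_le_cast.2 (hdeg v))
    (K := ε / (4 * Real.log (Fintype.card E))) (by positivity)
  refine ⟨P, hcross.trans ?_, hexp⟩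
  rw [sum_edgeDegree_univ]
  calc ε / (4 * Real.log (Fintype.card E)) *
        (2 * Fintype.card E * Real.log (2 * Fintype.card E))
      ≤ ε / (4 * Real.log (Fintype.card E)) *
        (2 * Fintype.card E * (2 * Real.log (Fintype.card E))) := by gcongr
    _ = ε * Fintype.card E := by
        field_simp
        norm_num

theorem exists_partition_spectral_gap (hdeg : ∀ v, 1 ≤ edgeDegree a b univ v)
    (hE : 2 ≤ Fintype.card E) (hε : 0 ≤ ε) :
    ∃ P : V → Fin (Fintype.card V), #(crossingEdges a b P) ≤ ε * Fintype.card E ∧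
      ∀ i (f : V → ℝ), ∑ v with P v = i, edgeDegree a b univ v * f v = 0 →
        Real.log 2 ^ 2 / 32 * ε ^ 2 / Real.log (Fintype.card E) ^ 2 *
            ∑ v with P v = i, edgeDegree a b univ v * f v ^ 2 ≤
          ∑ e ∈ innerEdges a b P i, (f (a e) - f (b e)) ^ 2 := by
  obtain ⟨P, hcross, hexp⟩ := exists_partition_conductance hdeg hE hε
  refine ⟨P, hcross, fun i f hf => ?_⟩
  have cheeger := (hexp i).cheeger (by positivity)
    (fun e he => by simpa [innerEdges] using he)
    (fun v _ => Nat.cast_le.2 (edgeDegree_mono (subset_univ _) v)) hf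
  convert cheeger using 2
  ring

end SpectralGap

theorem dotProduct_sum_edgeLapV_mulVec {V : Type} {E : Type*} [Fintype V] [DecidableEq V]
    (a b : E → V) (F : Finset E) (y : V → ℝ) :
    y ⬝ᵥ ((∑ e ∈ F, edgeLapV (a e) (b e)) *ᵥ y) = ∑ e ∈ F, (y (a e) - y (b e)) ^ 2 := by
  have edgeLapV_eq (u v : V) : edgeLapV u v =
      vecMulVec (Pi.single u 1 - Pi.single v 1) (Pi.single u 1 - Pi.single v 1) := by
    ext i j
    simp [edgeLapV, vecMulVec_apply, Pi.single_apply]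
  simp [sum_mulVec, dotProduct_sum, edgeLapV_eq, vecMulVec_mulVec, sub_dotProduct, dotProduct_sub,
    dotProduct_smul, sq]

theorem mul_div_sqrt (x y : ℝ) : x * (y / √x) = y * √x := by
  rw [mul_div_left_comm, Real.div_sqrt]

theorem mul_div_sqrt_sq {x : ℝ} (hx : 0 < x) (y : ℝ) : x * (y / √x) ^ 2 = y ^ 2 := by
  rw [div_pow, Real.sq_sqrt hx.le, mul_div_cancel₀ _ hx.ne']

theorem stmt_6 : ∃ c : ℝ, 0 < c ∧
    ∀ (V : Type) [Fintype V] [DecidableEq V] (E : Type) [Fintype E],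
    ∀ (a b : E → V), (∀ e, a e ≠ b e) →
    ∀ m : ℕ, m = Fintype.card E → 2 ≤ m →
    -- no isolated vertices
    (∀ v : V, ∃ e : E, a e = v ∨ b e = v) →
    ∀ ε : ℝ, ε ∈ Set.Ioo (0 : ℝ) 1 →
    ∃ (T : ℕ) (P : V → Fin T),
      -- (a) few edges cross between different parts
      ((Finset.univ.filter fun e : E => P (a e) ≠ P (b e)).card : ℝ) ≤ ε * m ∧
      -- (b) each part, with self-loops preserving `G`-degrees, has normalized-Laplacian
      -- spectral gap at least `c ε² / log² m` (stated variationally; vectors on `V_i`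
      -- are encoded as vectors on `V` supported on `V_i`)
      ∀ (i : Fin T) (z : V → ℝ),
        (∀ v, P v ≠ i → z v = 0) →
        (∑ v, z v * Real.sqrt ((Finset.univ.filter fun e : E => a e = v ∨ b e = v).card : ℝ)) = 0 →
        (c * ε ^ 2 / (Real.log m) ^ 2) * (∑ v, (z v) ^ 2) ≤
          (fun y : V → ℝ => y ⬝ᵥ
              ((∑ e ∈ Finset.univ.filter (fun e : E => P (a e) = i ∧ P (b e) = i),
                edgeLapV (a e) (b e)) *ᵥ y))
            (fun v => z v / Real.sqrt ((Finset.univ.filter fun e : E => a e = v ∨ b e = v).card : ℝ)) := by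
  refine ⟨Real.log 2 ^ 2 / 32, by positivity, ?_⟩
  rintro V _ _ E _ a b hab m rfl hm hiso ε ⟨hε, -⟩
  have degree_eq (v : V) : #{e | a e = v ∨ b e = v} = edgeDegree a b univ v :=
    (edgeDegree_eq_card_filter_or (fun e _ => hab e) v).symm
  have degree_pos (v : V) : 0 < edgeDegree a b univ v := by
    rw [← degree_eq, card_pos]
    simpa [Finset.Nonempty] using hiso v
  obtain ⟨P, hcross, hgap⟩ := exists_partition_spectral_gap degree_pos hm hε.le
  refine ⟨_, P, hcross, fun i z hz hsum => ?_⟩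
  simp only [degree_eq, dotProduct_sum_edgeLapV_mulVec] at hsum ⊢
  have gap := hgap i fun v => z v / √(edgeDegree a b univ v)
  simp only [mul_div_sqrt, mul_div_sqrt_sq (Nat.cast_pos.2 (degree_pos _))] at gap
  rw [sum_filter_of_ne, sum_filter_of_ne] at gap
  · exact gap hsum
  all_goals exact fun v _ hv => by_contra fun hvi => hv (by simp [hz v hvi])
end
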